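/- arXiv:math/0603035 — 3 statements merged into one kernel-verified Lean document; each statement's English description precedes it below -/
import Mathlib

section
/- Let m, n ≥ 1 and let (L_ε)_{ε∈(0,1]} be a moderate net of linear maps L_ε : 𝓢(ℝ^n) → C^∞(ℝ^m), each L_ε being continuous into O_M(ℝ^m), such that the constants in the moderation estimate can be chosen as follows: there exists a sequence r : ℕ → [0,+∞) with limsup_{l→∞} r(l)/l < 1 such that for every l ∈ ℕ there exist p, q, l' ∈ ℕ and C ≥ 0 with μ_{-p,l}(L_ε(f)) ≤ C ε^{-r(l)} μ_{q,l'}(f) for all f ∈ 𝓢(ℝ^n) and all ε small enough. Then there exists a net (H_ε)_{ε∈(0,1]} belonging to E_τ(ℝ^{m+n}) such that for every net (f_ε)_{ε∈(0,1]} belonging to E_S^∞(ℝ^n), the net ( x ↦ ∫_{ℝ^n} H_ε(x,y) f_ε(y) dy − L_ε(f_ε)(x) )_{ε∈(0,1]} belongs to N_τ(ℝ^m). -/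
open MeasureTheory Filter

noncomputable def mu {E : Type*} [NormedAddCommGroup E] [NormedSpace ℝ E]
    (r : ℤ) (l : ℕ) (f : E → ℂ) : ENNReal :=
  ⨆ (x : E) (i : ℕ) (_ : i ≤ l),
    ENNReal.ofReal ((1 + ‖x‖) ^ r * ‖iteratedFDeriv ℝ i f x‖)

def IsOEps (g : ℝ → ENNReal) (h : ℝ → ℝ) : Prop :=
  ∃ C > (0:ℝ), ∃ η > (0:ℝ), ∀ ε : ℝ, 0 < ε → ε ≤ η → g ε ≤ ENNReal.ofReal (C * h ε)

def SchwartzLike {E : Type*} [NormedAddCommGroup E] [NormedSpace ℝ E] (f : E → ℂ) : Prop :=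
  ContDiff ℝ (⊤ : ℕ∞) f ∧ ∀ q l : ℕ, mu (q : ℤ) l f < ⊤

def TemperateGrowth' {E : Type*} [NormedAddCommGroup E] [NormedSpace ℝ E] (f : E → ℂ) : Prop :=
  ContDiff ℝ (⊤ : ℕ∞) f ∧ ∀ l : ℕ, ∃ q : ℕ, mu (-(q:ℤ)) l f < ⊤

def IsESNet {E : Type*} [NormedAddCommGroup E] [NormedSpace ℝ E] (f : ℝ → E → ℂ) : Prop :=
  (∀ ε ∈ Set.Ioc (0:ℝ) 1, SchwartzLike (f ε)) ∧
  ∀ q l : ℕ, ∃ N : ℕ, IsOEps (fun ε => mu (q:ℤ) l (f ε)) (fun ε => ε ^ (-(N:ℤ)))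

def IsNSNet {E : Type*} [NormedAddCommGroup E] [NormedSpace ℝ E] (f : ℝ → E → ℂ) : Prop :=
  (∀ ε ∈ Set.Ioc (0:ℝ) 1, SchwartzLike (f ε)) ∧
  ∀ q l p : ℕ, IsOEps (fun ε => mu (q:ℤ) l (f ε)) (fun ε => ε ^ p)

def IsEtauNet {E : Type*} [NormedAddCommGroup E] [NormedSpace ℝ E] (f : ℝ → E → ℂ) : Prop :=
  (∀ ε ∈ Set.Ioc (0:ℝ) 1, TemperateGrowth' (f ε)) ∧
  ∀ l : ℕ, ∃ q N : ℕ, IsOEps (fun ε => mu (-(q:ℤ)) l (f ε)) (fun ε => ε ^ (-(N:ℤ)))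

def IsNtauNet {E : Type*} [NormedAddCommGroup E] [NormedSpace ℝ E] (f : ℝ → E → ℂ) : Prop :=
  (∀ ε ∈ Set.Ioc (0:ℝ) 1, TemperateGrowth' (f ε)) ∧
  ∀ l : ℕ, ∃ q : ℕ, ∀ p : ℕ, IsOEps (fun ε => mu (-(q:ℤ)) l (f ε)) (fun ε => ε ^ p)

noncomputable def scaled {d : ℕ} (ρ : (Fin d → ℝ) → ℂ) (t : ℝ) (x : Fin d → ℝ) : ℂ :=
  ((t ^ (-(d:ℤ)) : ℝ) : ℂ) * ρ (t⁻¹ • x)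

def IsMollifier {d : ℕ} (ρ : SchwartzMap (Fin d → ℝ) ℂ) : Prop :=
  (∫ x : Fin d → ℝ, ρ x) = 1 ∧
  ∀ α : Fin d → ℕ, α ≠ 0 → (∫ x : Fin d → ℝ, (∏ j, (x j : ℂ) ^ (α j)) * ρ x) = 0

def MemLa (a : ℝ) (N : ℕ → ℝ) : Prop :=
  (∀ l, 0 ≤ N l) ∧
  ((a = 0 ∧ Filter.Tendsto (fun l : ℕ => N l / (l:ℝ)) Filter.atTop (nhds 0)) ∨
   (0 < a ∧ Filter.limsup (fun l : ℕ => N l / (l:ℝ)) Filter.atTop < a))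

def IsESLNet {E : Type*} [NormedAddCommGroup E] [NormedSpace ℝ E]
    (a : ℝ) (f : ℝ → E → ℂ) : Prop :=
  (∀ ε ∈ Set.Ioc (0:ℝ) 1, SchwartzLike (f ε)) ∧
  ∃ N : ℕ → ℝ, MemLa a N ∧
    ∀ q l : ℕ, IsOEps (fun ε => mu (q:ℤ) l (f ε)) (fun ε => ε ^ (-(N l)))

def IsEtauLNet {E : Type*} [NormedAddCommGroup E] [NormedSpace ℝ E]
    (c : ℝ) (f : ℝ → E → ℂ) : Prop :=
  (∀ ε ∈ Set.Ioc (0:ℝ) 1, TemperateGrowth' (f ε)) ∧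
  ∃ N : ℕ → ℝ, MemLa c N ∧ ∃ q : ℕ, ∀ l : ℕ,
    IsOEps (fun ε => mu (-(q:ℤ)) l (f ε)) (fun ε => ε ^ (-(N l)))

def IsESinfNet {E : Type*} [NormedAddCommGroup E] [NormedSpace ℝ E] (f : ℝ → E → ℂ) : Prop :=
  (∀ ε ∈ Set.Ioc (0:ℝ) 1, SchwartzLike (f ε)) ∧
  ∃ N : ℕ, ∀ q l : ℕ, IsOEps (fun ε => mu (q:ℤ) l (f ε)) (fun ε => ε ^ (-(N:ℤ)))

def ModerateNetMaps (m n : ℕ)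
    (L : ℝ → SchwartzMap (Fin n → ℝ) ℂ → ((Fin m → ℝ) → ℂ)) : Prop :=
  (∀ ε ∈ Set.Ioc (0:ℝ) 1, ∀ f, TemperateGrowth' (L ε f)) ∧
  ∀ l : ℕ, ∃ C : ℝ → ℝ, (∀ ε, 0 ≤ C ε) ∧
    (∃ N : ℕ, ∃ C₀ > (0:ℝ), ∃ η > (0:ℝ), ∀ ε : ℝ, 0 < ε → ε ≤ η → C ε ≤ C₀ * ε ^ (-(N:ℤ))) ∧
    ∃ p q l' : ℕ, ∃ η > (0:ℝ), ∀ ε : ℝ, 0 < ε → ε ≤ η →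
      ∀ f : SchwartzMap (Fin n → ℝ) ℂ,
        mu (-(p:ℤ)) l (L ε f) ≤ ENNReal.ofReal (C ε) * mu (q:ℤ) l' ⇑f

def NegligibleNetMaps (m n : ℕ)
    (L : ℝ → SchwartzMap (Fin n → ℝ) ℂ → ((Fin m → ℝ) → ℂ)) : Prop :=
  (∀ ε ∈ Set.Ioc (0:ℝ) 1, ∀ f, TemperateGrowth' (L ε f)) ∧
  ∀ l : ℕ, ∃ C : ℝ → ℝ, (∀ ε, 0 ≤ C ε) ∧
    (∀ p' : ℕ, ∃ C₀ > (0:ℝ), ∃ η > (0:ℝ), ∀ ε : ℝ, 0 < ε → ε ≤ η → C ε ≤ C₀ * ε ^ p') ∧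
    ∃ p q l' : ℕ, ∃ η > (0:ℝ), ∀ ε : ℝ, 0 < ε → ε ≤ η →
      ∀ f : SchwartzMap (Fin n → ℝ) ℂ,
        mu (-(p:ℤ)) l (L ε f) ≤ ENNReal.ofReal (C ε) * mu (q:ℤ) l' ⇑f

def StronglyModerateWith (m n : ℕ)
    (L : ℝ → SchwartzMap (Fin n → ℝ) ℂ → ((Fin m → ℝ) → ℂ))
    (lam : ℕ → ℕ) (r : ℕ → ℝ) : Prop :=
  (∀ ε ∈ Set.Ioc (0:ℝ) 1, ∀ f, TemperateGrowth' (L ε f)) ∧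
  (∀ l, 0 ≤ r l) ∧
  ∀ l : ℕ, ∃ C ≥ (0:ℝ), ∃ p q : ℕ, ∃ η > (0:ℝ), ∀ ε : ℝ, 0 < ε → ε ≤ η →
    ∀ f : SchwartzMap (Fin n → ℝ) ℂ,
      mu (-(p:ℤ)) l (L ε f) ≤ ENNReal.ofReal (C * ε ^ (-(r l))) * mu (q:ℤ) (lam l) ⇑f

def ContinuousIntoOM (m n : ℕ) (L : SchwartzMap (Fin n → ℝ) ℂ → ((Fin m → ℝ) → ℂ)) : Prop :=
  ∀ l : ℕ, ∃ C ≥ (0:ℝ), ∃ p q l' : ℕ, ∀ f,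
    mu (-(p:ℤ)) l (L f) ≤ ENNReal.ofReal C * mu (q:ℤ) l' ⇑f

noncomputable def muOn {d : ℕ} (Ω : Set (Fin d → ℝ)) (r : ℤ) (l : ℕ)
    (f : (Fin d → ℝ) → ℂ) : ENNReal :=
  ⨆ (x : Ω) (i : ℕ) (_ : i ≤ l),
    ENNReal.ofReal ((1 + ‖(x : Fin d → ℝ)‖) ^ r * ‖iteratedFDerivWithin ℝ i f Ω (x : Fin d → ℝ)‖)

def IsBox {d : ℕ} (Ω : Set (Fin d → ℝ)) : Prop :=
  ∃ I : Fin d → Set ℝ, (∀ j, IsOpen (I j) ∧ Convex ℝ (I j)) ∧ Ω = Set.univ.pi I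

def IsRegularSet (R : Set (ℕ → ℝ)) : Prop :=
  R.Nonempty ∧ (∀ N ∈ R, ∀ n, 0 ≤ N n) ∧
  (∀ N ∈ R, ∀ k : ℕ, ∃ N' ∈ R, ∀ n, N n + k ≤ N' n) ∧
  (∀ N₁ ∈ R, ∀ N₂ ∈ R, ∃ N ∈ R, ∀ n, max (N₁ n) (N₂ n) ≤ N n) ∧
  (∀ N₁ ∈ R, ∀ N₂ ∈ R, ∃ N ∈ R, ∀ l₁ l₂ : ℕ, N₁ l₁ + N₂ l₂ ≤ N (l₁ + l₂))

def IsESRNet {E : Type*} [NormedAddCommGroup E] [NormedSpace ℝ E]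
    (R : Set (ℕ → ℝ)) (f : ℝ → E → ℂ) : Prop :=
  (∀ ε ∈ Set.Ioc (0:ℝ) 1, SchwartzLike (f ε)) ∧
  ∃ N ∈ R, ∀ q l : ℕ, IsOEps (fun ε => mu (q:ℤ) l (f ε)) (fun ε => ε ^ (-(N l)))

def IsEtauRNet {E : Type*} [NormedAddCommGroup E] [NormedSpace ℝ E]
    (R : Set (ℕ → ℝ)) (f : ℝ → E → ℂ) : Prop :=
  (∀ ε ∈ Set.Ioc (0:ℝ) 1, TemperateGrowth' (f ε)) ∧
  ∃ N ∈ R, ∃ q : ℕ, ∀ l : ℕ,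
    IsOEps (fun ε => mu (-(q:ℤ)) l (f ε)) (fun ε => ε ^ (-(N l)))

noncomputable def pderiv' {d : ℕ} (j : Fin d) (f : (Fin d → ℝ) → ℂ) : (Fin d → ℝ) → ℂ :=
  fun x => fderiv ℝ f x (Pi.single j 1)

noncomputable def multiDeriv {d : ℕ} : List (Fin d) → ((Fin d → ℝ) → ℂ) → ((Fin d → ℝ) → ℂ)
  | [], f => f
  | j :: js, f => pderiv' j (multiDeriv js f)

noncomputable section

open scoped FourierTransform SchwartzMap

/-- The character `z ↦ exp (2πi k·z)` of `ℝⁿ` attached to an integer vector `k`. -/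
def intChar {n : ℕ} (k : Fin n → ℤ) (z : Fin n → ℝ) : ℂ :=
  Complex.exp (2 * Real.pi * Complex.I * ((∑ i, (k i : ℝ) * z i : ℝ) : ℂ))

lemma mFourier_coe_eq_intChar {n : ℕ} (k : Fin n → ℤ) (z : Fin n → ℝ) :
    UnitAddTorus.mFourier k (fun i => (z i : UnitAddCircle)) = intChar k z := by
  simp only [UnitAddTorus.mFourier, ContinuousMap.coe_mk, fourier_coe_apply, intChar,
    ← Complex.exp_sum]
  congr 1
  push_cast
  rw [Finset.mul_sum]
  refine Finset.sum_congr rfl fun i _ => ?_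
  simp; ring

lemma hasSum_intChar_of_support {n : ℕ} (g : (Fin n → ℝ) → ℂ) (hg : Continuous g)
    (hsupp : ∀ x, g x ≠ 0 → ‖x‖ ≤ 1 / 4)
    (hs : Summable fun k : Fin n → ℤ => ∫ y, intChar (-k) y * g y)
    (z : Fin n → ℝ) (hz : ‖z‖ < 1 / 2) :
    HasSum (fun k : Fin n → ℤ => (∫ y, intChar (-k) y * g y) * intChar k z) (g z) := by
  set e : UnitAddTorus (Fin n) → Fin n → ℝ :=
    fun θ i => (AddCircle.equivIoc (1 : ℝ) (-(1 / 2)) (θ i) : ℝ) with he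
  have hmk : ∀ θ i, ((e θ i : ℝ) : UnitAddCircle) = θ i := fun θ i => AddCircle.coe_equivIoc ..
  have hemk : ∀ x : Fin n → ℝ, (∀ i, x i ∈ Set.Ioc (-(1 / 2) : ℝ) (-(1 / 2) + 1)) →
      e (fun i => (x i : UnitAddCircle)) = x := by
    intro x hx
    ext i
    simp [he, AddCircle.equivIoc_coe_eq (hx i)]
  have hcont : Continuous fun θ => g (e θ) := by
    rw [continuous_iff_continuousAt]
    intro θ
    by_cases h : ∀ i, θ i ≠ ((-(1 / 2) : ℝ) : UnitAddCircle)
    · refine hg.continuousAt.comp (continuousAt_pi.2 fun i => ?_)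
      exact (continuousAt_subtype_val.comp
        (AddCircle.continuousAt_equivIoc 1 (-(1 / 2)) (h i))).comp
          (f := fun θ : UnitAddTorus (Fin n) => θ i) (continuousAt_apply i θ)
    · push Not at h
      obtain ⟨i, hi⟩ := h
      set K : Set UnitAddCircle := (fun t : ℝ => (t : UnitAddCircle)) '' Set.Icc (-(1 / 4)) (1 / 4)
      have hK : IsClosed K :=
        (isCompact_Icc.image (AddCircle.continuous_mk' 1)).isClosed
      have hiK : θ i ∉ K := by
        rintro ⟨t, ht, hti⟩
        rw [hi] at hti
        have h1 := AddCircle.equivIoc_coe_eq (p := (1 : ℝ)) (a := -(1 / 2)) (x := t)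
          ⟨by linarith [ht.1], by linarith [ht.2]⟩
        have h2 := AddCircle.equivIoc_coe_eq (p := (1 : ℝ)) (a := -(1 / 2)) (x := 1 / 2)
          ⟨by norm_num, by norm_num⟩
        have h3 : ((1 / 2 : ℝ) : UnitAddCircle) = ((-(1 / 2) : ℝ) : UnitAddCircle) := by
          rw [← AddCircle.coe_add_period 1 (-(1 / 2) : ℝ)]; norm_num
        have hti' : (t : UnitAddCircle) = ((-(1 / 2) : ℝ) : UnitAddCircle) := hti
        rw [hti', ← h3, h2] at h1
        have := congrArg Subtype.val h1
        simp only at this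
        linarith [ht.2]
      have hev : ∀ᶠ θ' in nhds θ, g (e θ') = 0 := by
        filter_upwards [(continuousAt_apply i θ).eventually (hK.isOpen_compl.mem_nhds hiK)]
          with θ' hθ'
        by_contra hne
        have h4 := (norm_le_pi_norm (e θ') i).trans (hsupp _ hne)
        rw [Real.norm_eq_abs, abs_le] at h4
        exact hθ' ⟨e θ' i, h4, hmk θ' i⟩
      exact (continuousAt_const (y := (0 : ℂ))).congr (hev.mono fun _ h => h.symm)
  set G : C(UnitAddTorus (Fin n), ℂ) := ⟨fun θ => g (e θ), hcont⟩
  have hcoef : ∀ k, UnitAddTorus.mFourierCoeff G k = ∫ y, intChar (-k) y * g y := by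
    intro k
    rw [UnitAddTorus.mFourierCoeff_eq_integral _ _ (fun _ => -(1 / 2)),
      ← setIntegral_eq_integral_of_forall_compl_eq_zero (f := fun y => intChar (-k) y * g y)
        (s := {x : Fin n → ℝ | ∀ i, x i ∈ Set.Ioc (-(1 / 2) : ℝ) (-(1 / 2) + 1)})]
    · refine setIntegral_congr_fun (MeasurableSet.univ_pi' fun i => measurableSet_Ioc) ?_
      intro x hx
      simp only [mFourier_coe_eq_intChar, smul_eq_mul, G, ContinuousMap.coe_mk, hemk x hx]
    · intro x hx
      have : g x = 0 := by
        by_contra hne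
        refine hx fun i => ?_
        have h4 := (norm_le_pi_norm x i).trans (hsupp _ hne)
        rw [Real.norm_eq_abs, abs_le] at h4
        constructor <;> linarith [h4.1, h4.2]
      simp [this]
  have hzI : ∀ i, z i ∈ Set.Ioc (-(1 / 2) : ℝ) (-(1 / 2) + 1) := by
    intro i
    have h4 := (norm_le_pi_norm z i).trans_lt hz
    rw [Real.norm_eq_abs, abs_lt] at h4
    constructor <;> linarith [h4.1, h4.2]
  have hsum : Summable (UnitAddTorus.mFourierCoeff G) := by
    simpa only [funext hcoef] using hs
  have key := UnitAddTorus.hasSum_mFourier_series_apply_of_summable hsum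
    (fun i => (z i : UnitAddCircle))
  simp only [hcoef] at key
  simpa only [mFourier_coe_eq_intChar, smul_eq_mul, G, ContinuousMap.coe_mk,
    hemk z hzI] using key

lemma norm_iteratedFDeriv_mul_le_of_le {E : Type*} [NormedAddCommGroup E] [NormedSpace ℝ E]
    {f g : E → ℂ} (hf : ContDiff ℝ (⊤ : ℕ∞) f) (hg : ContDiff ℝ (⊤ : ℕ∞) g) {l i : ℕ} (hi : i ≤ l)
    {x : E} {A B : ℝ} (hA : ∀ a ≤ l, ‖iteratedFDeriv ℝ a f x‖ ≤ A)
    (hB : ∀ a ≤ l, ‖iteratedFDeriv ℝ a g x‖ ≤ B) :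
    ‖iteratedFDeriv ℝ i (fun y => f y * g y) x‖ ≤ 2 ^ l * (A * B) := by
  have hA0 : 0 ≤ A := (norm_nonneg _).trans (hA 0 (Nat.zero_le _))
  have hB0 : 0 ≤ B := (norm_nonneg _).trans (hB 0 (Nat.zero_le _))
  refine (norm_iteratedFDeriv_mul_le hf hg x (n := i) (by exact_mod_cast le_top)).trans ?_
  calc ∑ j ∈ Finset.range (i + 1),
        (i.choose j : ℝ) * ‖iteratedFDeriv ℝ j f x‖ * ‖iteratedFDeriv ℝ (i - j) g x‖
      ≤ ∑ j ∈ Finset.range (i + 1), (i.choose j : ℝ) * (A * B) := by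
        refine Finset.sum_le_sum fun j hj => ?_
        have hj' : j ≤ i := Nat.lt_succ_iff.1 (Finset.mem_range.1 hj)
        rw [mul_assoc]
        gcongr
        · exact hA j (hj'.trans hi)
        · exact hB _ ((Nat.sub_le _ _).trans hi)
    _ = 2 ^ i * (A * B) := by
        rw [← Finset.sum_mul]
        norm_cast
        rw [Nat.sum_range_choose]
    _ ≤ 2 ^ l * (A * B) := by
        gcongr
        norm_num

lemma norm_iteratedFDeriv_comp_clm_le {E F : Type*} [NormedAddCommGroup E] [NormedSpace ℝ E]
    [NormedAddCommGroup F] [NormedSpace ℝ F] (T : E →L[ℝ] F) {f : F → ℂ}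
    (hf : ContDiff ℝ (⊤ : ℕ∞) f) (i : ℕ) (x : E) :
    ‖iteratedFDeriv ℝ i (fun y => f (T y)) x‖ ≤ ‖iteratedFDeriv ℝ i f (T x)‖ * ‖T‖ ^ i := by
  have := T.iteratedFDeriv_comp_right hf x (i := i) (by exact_mod_cast le_top)
  rw [Function.comp_def] at this
  rw [this]
  simpa using ContinuousMultilinearMap.norm_compContinuousLinearMap_le
    (iteratedFDeriv ℝ i f (T x)) fun _ => T

lemma SchwartzMap.exists_bound {E : Type*} [NormedAddCommGroup E] [NormedSpace ℝ E]
    (φ : 𝓢(E, ℂ)) (q l : ℕ) :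
    ∃ A, 0 ≤ A ∧ ∀ a ≤ l, ∀ x, (1 + ‖x‖) ^ q * ‖iteratedFDeriv ℝ a φ x‖ ≤ A :=
  ⟨2 ^ q * ((Finset.Iic (q, l)).sup fun m => SchwartzMap.seminorm ℝ m.1 m.2) φ,
    by positivity, fun _ ha x => SchwartzMap.one_add_le_sup_seminorm_apply (𝕜 := ℝ) (m := (q, l))
      le_rfl ha φ x⟩

lemma one_add_norm_le_mul {E : Type*} [NormedAddCommGroup E] (x b : E) :
    1 + ‖x‖ ≤ (1 + ‖x - b‖) * (1 + ‖b‖) := by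
  have h : ‖x‖ ≤ ‖x - b‖ + ‖b‖ := by simpa using norm_add_le (x - b) b
  nlinarith [norm_nonneg (x - b), norm_nonneg b]

/-- The linear form `z ↦ k·z`. -/
def dotLeft {n : ℕ} (k : Fin n → ℤ) : (Fin n → ℝ) →L[ℝ] ℝ :=
  ∑ i, (k i : ℝ) • ContinuousLinearMap.proj (R := ℝ) (φ := fun _ : Fin n => ℝ) i

lemma dotLeft_apply {n : ℕ} (k : Fin n → ℤ) (z : Fin n → ℝ) :
    dotLeft k z = ∑ i, (k i : ℝ) * z i := by
  simp [dotLeft]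

lemma norm_dotLeft_le {n : ℕ} (k : Fin n → ℤ) : ‖dotLeft k‖ ≤ n * ‖k‖ := by
  refine ContinuousLinearMap.opNorm_le_bound _ (by positivity) fun z => ?_
  rw [dotLeft_apply]
  refine (norm_sum_le _ _).trans ?_
  calc ∑ i, ‖(k i : ℝ) * z i‖ ≤ ∑ _i : Fin n, ‖k‖ * ‖z‖ := by
        refine Finset.sum_le_sum fun i _ => ?_
        rw [norm_mul]
        gcongr
        · rw [Int.norm_cast_real]
          exact norm_le_pi_norm k i
        · exact norm_le_pi_norm z i
    _ = n * ‖k‖ * ‖z‖ := by simp [mul_assoc]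

lemma iteratedDeriv_cexp_real_mul (c : ℂ) (i : ℕ) :
    iteratedDeriv i (fun t : ℝ => Complex.exp (c * t)) = fun t : ℝ => c ^ i * Complex.exp (c * t) := by
  induction i with
  | zero => simp
  | succ i ih =>
    rw [iteratedDeriv_succ, ih]
    ext t
    have h : HasDerivAt (fun t : ℝ => c * (t : ℂ)) (c * 1) t :=
      (Complex.ofRealCLM.hasDerivAt (x := t)).const_mul c
    rw [((h.cexp).const_mul (c ^ i)).deriv]
    ring

lemma contDiff_cexp_real_mul (c : ℂ) :
    ContDiff ℝ (⊤ : ℕ∞) (fun t : ℝ => Complex.exp (c * t)) :=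
  (contDiff_const.mul Complex.ofRealCLM.contDiff).cexp

lemma intChar_eq_comp {n : ℕ} (k : Fin n → ℤ) :
    intChar k = fun z => (fun t : ℝ => Complex.exp (2 * Real.pi * Complex.I * t)) (dotLeft k z) := by
  ext z
  rw [dotLeft_apply, intChar]

lemma contDiff_intChar {n : ℕ} (k : Fin n → ℤ) : ContDiff ℝ (⊤ : ℕ∞) (intChar k) := by
  rw [intChar_eq_comp]
  exact (contDiff_cexp_real_mul _).comp (dotLeft k).contDiff

lemma norm_iteratedFDeriv_intChar_le {n : ℕ} (k : Fin n → ℤ) {i l : ℕ} (hi : i ≤ l)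
    (z : Fin n → ℝ) :
    ‖iteratedFDeriv ℝ i (intChar k) z‖ ≤ ((1 + 2 * Real.pi * n) * (1 + ‖k‖)) ^ l := by
  have hpi := Real.pi_pos
  rw [intChar_eq_comp]
  refine (norm_iteratedFDeriv_comp_clm_le (dotLeft k)
    (contDiff_cexp_real_mul (2 * Real.pi * Complex.I)) i z).trans ?_
  rw [norm_iteratedFDeriv_eq_norm_iteratedDeriv, iteratedDeriv_cexp_real_mul]
  have h1 : ‖Complex.exp (2 * Real.pi * Complex.I * (dotLeft k z : ℂ))‖ = 1 := by
    have : 2 * Real.pi * Complex.I * (dotLeft k z : ℂ) =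
        ((2 * Real.pi * dotLeft k z : ℝ) : ℂ) * Complex.I := by push_cast; ring
    rw [this, Complex.norm_exp_ofReal_mul_I]
  have h2 : ‖(2 * Real.pi * Complex.I : ℂ)‖ = 2 * Real.pi := by
    simp [abs_of_pos hpi]
  rw [norm_mul, norm_pow, h1, h2, mul_one, ← mul_pow]
  calc (2 * Real.pi * ‖dotLeft k‖) ^ i ≤ ((1 + 2 * Real.pi * n) * (1 + ‖k‖)) ^ i := by
        refine pow_le_pow_left₀ (by positivity) ?_ i
        have := norm_dotLeft_le k
        calc 2 * Real.pi * ‖dotLeft k‖ ≤ 2 * Real.pi * (n * ‖k‖) := by gcongr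
          _ ≤ _ := by nlinarith [norm_nonneg k, show 0 ≤ 2 * Real.pi * n by positivity]
    _ ≤ _ := by
        refine pow_le_pow_right₀ ?_ hi
        nlinarith [norm_nonneg k, show 0 ≤ 2 * Real.pi * n by positivity]

lemma exists_bound_modulate_translate {n : ℕ} (φ : 𝓢(Fin n → ℝ, ℂ)) (q l : ℕ) :
    ∃ A, 0 ≤ A ∧ ∀ (k : Fin n → ℤ) (b : Fin n → ℝ), ∀ a ≤ l, ∀ z,
      (1 + ‖z‖) ^ q * ‖iteratedFDeriv ℝ a (fun z => φ (z - b) * intChar k (z - b)) z‖ ≤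
        A * ((1 + ‖b‖) * (1 + ‖k‖)) ^ (q + l) := by
  obtain ⟨A, hA0, hA⟩ := φ.exists_bound q l
  have hpi := Real.pi_pos
  refine ⟨2 ^ l * (A * (1 + 2 * Real.pi * n) ^ l), by positivity, fun k b a ha z => ?_⟩
  rw [iteratedFDeriv_comp_sub (f := fun u => φ u * intChar k u)]
  set u := z - b
  have hmul := norm_iteratedFDeriv_mul_le_of_le (φ.smooth ⊤) (contDiff_intChar k) ha (x := u)
    (A := A / (1 + ‖u‖) ^ q) (B := ((1 + 2 * Real.pi * n) * (1 + ‖k‖)) ^ l)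
    (fun a ha => by rw [le_div_iff₀ (by positivity), mul_comm]; exact hA a ha u)
    (fun a ha => norm_iteratedFDeriv_intChar_le k ha u)
  calc (1 + ‖z‖) ^ q * ‖iteratedFDeriv ℝ a (fun u => φ u * intChar k u) u‖
      ≤ ((1 + ‖u‖) * (1 + ‖b‖)) ^ q * (2 ^ l * (A / (1 + ‖u‖) ^ q *
          ((1 + 2 * Real.pi * n) * (1 + ‖k‖)) ^ l)) := by
        gcongr
        exact one_add_norm_le_mul z b
    _ = 2 ^ l * (A * (1 + 2 * Real.pi * n) ^ l) * ((1 + ‖b‖) ^ q * (1 + ‖k‖) ^ l) := by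
        rw [mul_pow, mul_pow]
        field_simp
    _ ≤ 2 ^ l * (A * (1 + 2 * Real.pi * n) ^ l) * ((1 + ‖b‖) ^ (q + l) * (1 + ‖k‖) ^ (q + l)) := by
        have hb : 1 ≤ 1 + ‖b‖ := by simp
        have hk : 1 ≤ 1 + ‖k‖ := by simp
        gcongr <;> first | assumption | omega
    _ = _ := by rw [mul_pow]

/-- The Schwartz function `z ↦ φ (z - b) exp (2πi k·(z - b))`. -/
def modulateTranslate {n : ℕ} (φ : 𝓢(Fin n → ℝ, ℂ)) (k : Fin n → ℤ) (b : Fin n → ℝ) :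
    𝓢(Fin n → ℝ, ℂ) where
  toFun z := φ (z - b) * intChar k (z - b)
  smooth' := ((φ.smooth ⊤).mul (contDiff_intChar k)).comp (contDiff_id.sub contDiff_const)
  decay' q l := by
    obtain ⟨A, _, hA⟩ := exists_bound_modulate_translate φ q l
    refine ⟨_, fun z => le_trans ?_ (hA k b l le_rfl z)⟩
    gcongr
    simp

/-- The standard scalar product of `ℝⁿ` as a continuous bilinear form. -/
def dotBilin (n : ℕ) : (Fin n → ℝ) →L[ℝ] (Fin n → ℝ) →L[ℝ] ℝ :=
  ∑ i, (ContinuousLinearMap.proj (R := ℝ) (φ := fun _ : Fin n => ℝ) i).smulRight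
    (ContinuousLinearMap.proj (R := ℝ) (φ := fun _ : Fin n => ℝ) i)

lemma dotBilin_apply {n : ℕ} (v w : Fin n → ℝ) : dotBilin n v w = ∑ i, v i * w i := by
  simp [dotBilin]

lemma fourierIntegral_dotBilin_intCast {n : ℕ} (F : (Fin n → ℝ) → ℂ) (k : Fin n → ℤ) :
    VectorFourier.fourierIntegral 𝐞 volume (dotBilin n).toLinearMap₁₂ F (fun i => (k i : ℝ)) =
      ∫ u, intChar (-k) u * F u := by
  unfold VectorFourier.fourierIntegral
  congr 1
  ext u
  rw [Circle.smul_def, Real.fourierChar_apply, smul_eq_mul, intChar]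
  congr 2
  have : (dotBilin n).toLinearMap₁₂ u (fun i => (k i : ℝ)) = ∑ i, u i * (k i : ℝ) :=
    dotBilin_apply u _
  rw [this]
  have h2 : ∑ i, ((-k) i : ℝ) * u i = -∑ i, u i * (k i : ℝ) := by
    rw [← Finset.sum_neg_distrib]
    exact Finset.sum_congr rfl fun i _ => by push_cast [Pi.neg_apply]; ring
  rw [h2]
  push_cast
  ring

lemma integrable_one_add_norm_pow_inv (n : ℕ) :
    Integrable fun u : Fin n → ℝ => ((1 + ‖u‖) ^ (n + 1))⁻¹ := by
  have h := integrable_one_add_norm (E := Fin n → ℝ) (μ := volume) (r := (n : ℝ) + 1) (by simp)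
  refine h.congr (ae_of_all _ fun u => ?_)
  simp only
  rw [Real.rpow_neg (by positivity)]
  norm_cast

lemma one_add_pow_le_two_pow_mul {x : ℝ} (hx : 0 ≤ x) (M : ℕ) :
    (1 + x) ^ M ≤ 2 ^ M * (1 + x ^ M) := by
  rcases le_total x 1 with h | h
  · calc (1 + x) ^ M ≤ 2 ^ M := by gcongr; linarith
      _ ≤ 2 ^ M * (1 + x ^ M) := le_mul_of_one_le_right (by positivity) (by simp; positivity)
  · calc (1 + x) ^ M ≤ (2 * x) ^ M := by gcongr; linarith
      _ = 2 ^ M * x ^ M := mul_pow ..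
      _ ≤ _ := by gcongr; linarith

lemma exists_bound_fourier_coeff {n : ℕ} (hn : 1 ≤ n) (χ : 𝓢(Fin n → ℝ, ℂ)) (M : ℕ) :
    ∃ C, 0 ≤ C ∧ ∀ (f : 𝓢(Fin n → ℝ, ℂ)) (B : ℝ),
      (∀ a ≤ M, ∀ x, (1 + ‖x‖) ^ M * ‖iteratedFDeriv ℝ a f x‖ ≤ B) →
      ∀ (k : Fin n → ℤ) (b : Fin n → ℝ), ‖∫ u, intChar (-k) u * (χ u * f (u + b))‖ ≤
        C * B * (((1 + ‖b‖) * (1 + ‖k‖)) ^ M)⁻¹ := by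
  obtain ⟨A, hA0, hA⟩ := χ.exists_bound (M + (n + 1)) M
  set I := ∫ u : Fin n → ℝ, ((1 + ‖u‖) ^ (n + 1))⁻¹ with hI
  have hI0 : 0 ≤ I := integral_nonneg fun u => by positivity
  refine ⟨2 ^ M * (1 + 2 ^ M * (M + 1)) * (2 ^ M * A * I), by positivity, fun f B hB k b => ?_⟩
  have hB0 : 0 ≤ B := le_trans (by positivity) (hB 0 (Nat.zero_le _) 0)
  set F : (Fin n → ℝ) → ℂ := fun u => χ u * f (u + b) with hF
  have hfb : ContDiff ℝ (⊤ : ℕ∞) fun u => f (u + b) :=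
    (f.smooth ⊤).comp (contDiff_id.add contDiff_const)
  have hFs : ContDiff ℝ (⊤ : ℕ∞) F := (χ.smooth ⊤).mul hfb
  set D := 2 ^ M * A * B * ((1 + ‖b‖) ^ M)⁻¹ with hD
  have hD0 : 0 ≤ D := by positivity
  have hbound : ∀ p ≤ M, ∀ u, ‖iteratedFDeriv ℝ p F u‖ ≤ D * ((1 + ‖u‖) ^ (n + 1))⁻¹ := by
    intro p hp u
    have hmul := norm_iteratedFDeriv_mul_le_of_le (χ.smooth ⊤) hfb hp (x := u)
      (A := A / (1 + ‖u‖) ^ (M + (n + 1))) (B := B / (1 + ‖u + b‖) ^ M)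
      (fun a ha => by rw [le_div_iff₀ (by positivity), mul_comm]; exact hA a ha u)
      (fun a ha => by
        rw [iteratedFDeriv_comp_add_right, le_div_iff₀ (by positivity), mul_comm]
        exact hB a ha (u + b))
    refine hmul.trans ?_
    have h1 : (1 + ‖b‖) ^ M ≤ ((1 + ‖u + b‖) * (1 + ‖u‖)) ^ M := by
      have := one_add_norm_le_mul b (-u)
      rw [sub_neg_eq_add, norm_neg, add_comm b u] at this
      gcongr
    calc 2 ^ M * (A / (1 + ‖u‖) ^ (M + (n + 1)) * (B / (1 + ‖u + b‖) ^ M))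
        = 2 ^ M * A * B * (((1 + ‖u + b‖) * (1 + ‖u‖)) ^ M)⁻¹ * ((1 + ‖u‖) ^ (n + 1))⁻¹ := by
          rw [pow_add, mul_pow]
          field_simp
      _ ≤ D * ((1 + ‖u‖) ^ (n + 1))⁻¹ := by
          rw [hD]
          gcongr
  have hint : ∀ p ≤ M, Integrable fun u => ‖iteratedFDeriv ℝ p F u‖ := by
    intro p hp
    refine ((integrable_one_add_norm_pow_inv n).const_mul D).mono' ?_ ?_
    · exact (hFs.continuous_iteratedFDeriv (m := p) (by exact_mod_cast le_top)).norm.aestronglyMeasurable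
    · exact ae_of_all _ fun u => by simpa using hbound p hp u
  have hintle : ∀ p ≤ M, ∫ u, ‖iteratedFDeriv ℝ p F u‖ ≤ D * I := by
    intro p hp
    rw [hI, ← integral_const_mul]
    exact integral_mono (hint p hp) ((integrable_one_add_norm_pow_inv n).const_mul D) (hbound p hp)
  rw [← fourierIntegral_dotBilin_intCast]
  set c := VectorFourier.fourierIntegral 𝐞 volume (dotBilin n).toLinearMap₁₂ F
    (fun i => (k i : ℝ)) with hc
  have hc0 : ‖c‖ ≤ D * I := by
    refine (VectorFourier.norm_fourierIntegral_le_integral_norm _ _ _ _ _).trans ?_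
    simpa using hintle 0 (Nat.zero_le _)
  have hcM : ‖k‖ ^ M * ‖c‖ ≤ 2 ^ M * (M + 1) * (D * I) := by
    have : Nonempty (Fin n) := ⟨⟨0, hn⟩⟩
    obtain ⟨i, hi⟩ := Finite.exists_max fun i => ‖k i‖
    have hki : ‖k‖ = ‖k i‖ :=
      le_antisymm ((pi_norm_le_iff_of_nonneg (norm_nonneg _)).2 hi) (norm_le_pi_norm k i)
    have key := VectorFourier.pow_mul_norm_iteratedFDeriv_fourierIntegral_le (dotBilin n)
      (μ := volume) (K := 0) (N := M) (f := F) (hFs.of_le (by exact_mod_cast le_top))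
      (fun k' p hk' hp => by
        have hk0 : k' = 0 := by simpa using hk'
        subst hk0
        simpa using hint p (by exact_mod_cast hp))
      (k := 0) (n := M) le_rfl le_rfl (Pi.single i 1) (fun i => (k i : ℝ))
    have hL : |dotBilin n (Pi.single i 1) (fun i => (k i : ℝ))| = ‖k‖ := by
      rw [dotBilin_apply, hki, ← Int.norm_cast_real, Real.norm_eq_abs]
      simp [Pi.single_apply]
    rw [hL, norm_iteratedFDeriv_zero, ← hc] at key
    refine key.trans ?_
    have hnorm : ‖(Pi.single i 1 : Fin n → ℝ)‖ = 1 := by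
      rw [Pi.norm_single, norm_one]
    rw [hnorm]
    simp only [one_pow, pow_zero, mul_one, one_mul, Nat.cast_zero, mul_zero, zero_add,
      Finset.range_one, Finset.sum_product, Finset.sum_singleton]
    rw [mul_assoc]
    gcongr
    calc ∑ p ∈ Finset.range (M + 1), ∫ u, ‖iteratedFDeriv ℝ p F u‖
        ≤ ∑ _p ∈ Finset.range (M + 1), D * I :=
          Finset.sum_le_sum fun p hp => hintle p (Nat.lt_succ_iff.1 (Finset.mem_range.1 hp))
      _ = (M + 1) * (D * I) := by simp
  have hfin : (1 + ‖k‖) ^ M * ‖c‖ ≤ 2 ^ M * (1 + 2 ^ M * (M + 1)) * (D * I) := by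
    calc (1 + ‖k‖) ^ M * ‖c‖ ≤ 2 ^ M * (1 + ‖k‖ ^ M) * ‖c‖ := by
          gcongr
          exact one_add_pow_le_two_pow_mul (norm_nonneg _) M
      _ = 2 ^ M * (‖c‖ + ‖k‖ ^ M * ‖c‖) := by ring
      _ ≤ 2 ^ M * (D * I + 2 ^ M * (M + 1) * (D * I)) := by gcongr
      _ = _ := by ring
  rw [mul_pow, mul_inv, ← mul_assoc, ← div_eq_mul_inv, le_div_iff₀ (by positivity), mul_comm]
  refine hfin.trans_eq ?_
  rw [hD]
  ring

/-- A smooth function on `ℝ`, supported in `[-1/4, 1/4]`, whose translates by `ℤ/4` sum to `1`. -/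
def cutoffReal (t : ℝ) : ℝ := Real.smoothTransition (4 * t + 1) - Real.smoothTransition (4 * t)

lemma contDiff_cutoffReal : ContDiff ℝ (⊤ : ℕ∞) cutoffReal :=
  (Real.smoothTransition.contDiff.comp ((contDiff_const.mul contDiff_id).add contDiff_const)).sub
    (Real.smoothTransition.contDiff.comp (contDiff_const.mul contDiff_id))

lemma cutoffReal_eq_zero {t : ℝ} (ht : 1 / 4 ≤ |t|) : cutoffReal t = 0 := by
  rw [cutoffReal]
  rcases le_abs.1 ht with h | h
  · rw [Real.smoothTransition.one_of_one_le (by linarith),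
      Real.smoothTransition.one_of_one_le (by linarith), sub_self]
  · rw [Real.smoothTransition.zero_of_nonpos (by linarith),
      Real.smoothTransition.zero_of_nonpos (by linarith), sub_self]

/-- The integers `j` for which `t` can lie in the support of `cutoffReal (· - j / 4)`. -/
def activeShifts (t : ℝ) : Finset ℤ := {⌊4 * t⌋, ⌊4 * t⌋ + 1}

lemma cutoffReal_sub_eq_zero {t : ℝ} {j : ℤ} (hj : j ∉ activeShifts t) :
    cutoffReal (t - j / 4) = 0 := by
  apply cutoffReal_eq_zero
  by_contra! h
  rw [abs_lt] at h
  apply hj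
  have h1 : ⌊4 * t⌋ < j + 1 := by
    rw [Int.floor_lt]; push_cast; linarith [h.2]
  have h2 : j - 1 ≤ ⌊4 * t⌋ := by
    rw [Int.le_floor]; push_cast; linarith [h.1]
  simp only [activeShifts, Finset.mem_insert, Finset.mem_singleton]
  omega

lemma sum_cutoffReal_sub (t : ℝ) : ∑ j ∈ activeShifts t, cutoffReal (t - j / 4) = 1 := by
  rw [activeShifts, Finset.sum_pair (by omega)]
  set v := Int.fract (4 * t) with hv
  have h0 : (0 : ℝ) ≤ v := Int.fract_nonneg _
  have h1 : v < 1 := Int.fract_lt_one _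
  have hf : (⌊4 * t⌋ : ℝ) = 4 * t - v := by rw [hv, Int.fract]; ring
  push_cast
  rw [hf, cutoffReal, cutoffReal]
  have e1 : 4 * (t - (4 * t - v) / 4) = v := by ring
  have e2 : 4 * (t - (4 * t - v + 1) / 4) = v - 1 := by ring
  rw [e1, e2, sub_add_cancel, Real.smoothTransition.one_of_one_le (x := v + 1) (by linarith),
    Real.smoothTransition.zero_of_nonpos (x := v - 1) (by linarith)]
  ring

/-- The product of the `cutoffReal`s of all coordinates. -/
def cutoffPi {n : ℕ} (u : Fin n → ℝ) : ℂ := ((∏ i, cutoffReal (u i) : ℝ) : ℂ)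

lemma contDiff_cutoffPi {n : ℕ} : ContDiff ℝ (⊤ : ℕ∞) (cutoffPi (n := n)) := by
  have h : ContDiff ℝ (⊤ : ℕ∞) fun u : Fin n → ℝ => ∏ i, cutoffReal (u i) :=
    contDiff_prod fun i _ => contDiff_cutoffReal.comp (contDiff_apply ℝ ℝ i)
  exact Complex.ofRealCLM.contDiff.comp h

lemma norm_le_of_cutoffPi_ne_zero {n : ℕ} {u : Fin n → ℝ} (hu : cutoffPi u ≠ 0) :
    ‖u‖ ≤ 1 / 4 := by
  refine (pi_norm_le_iff_of_nonneg (by norm_num)).2 fun i => ?_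
  by_contra! h
  apply hu
  rw [cutoffPi, Finset.prod_eq_zero (Finset.mem_univ i) (cutoffReal_eq_zero h.le),
    Complex.ofReal_zero]

lemma hasCompactSupport_cutoffPi {n : ℕ} : HasCompactSupport (cutoffPi (n := n)) :=
  HasCompactSupport.intro (isCompact_closedBall 0 (1 / 4)) fun u hu => by
    by_contra h
    exact hu (by simpa using norm_le_of_cutoffPi_ne_zero h)

lemma hasSum_cutoffPi_sub {n : ℕ} (z : Fin n → ℝ) :
    HasSum (fun j : Fin n → ℤ => cutoffPi (z - fun i => (j i : ℝ) / 4)) 1 := by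
  have h : ∑ j ∈ Fintype.piFinset fun i => activeShifts (z i),
      cutoffPi (z - fun i => (j i : ℝ) / 4) = 1 := by
    simp only [cutoffPi, Pi.sub_apply]
    rw [← Complex.ofReal_sum, ← Finset.prod_univ_sum (fun i => activeShifts (z i))
      fun i j => cutoffReal (z i - (j : ℝ) / 4)]
    simp [sum_cutoffReal_sub]
  rw [← h]
  refine hasSum_sum_of_ne_finset_zero fun j hj => ?_
  rw [Fintype.mem_piFinset] at hj
  push Not at hj
  obtain ⟨i, hi⟩ := hj
  rw [cutoffPi, Finset.prod_eq_zero (Finset.mem_univ i) (cutoffReal_sub_eq_zero hi),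
    Complex.ofReal_zero]

lemma norm_intCast_pi {n : ℕ} (j : Fin n → ℤ) : ‖fun i => (j i : ℝ)‖ = ‖j‖ := by
  have h : ∀ i, ‖(j i : ℝ)‖₊ = ‖j i‖₊ := fun i => NNReal.eq (Int.norm_cast_real _)
  simp only [Pi.norm_def, h]

lemma summable_one_add_norm_pow_inv (n : ℕ) :
    Summable fun j : Fin n → ℤ => ((1 + ‖j‖) ^ (n + 1))⁻¹ := by
  set L := Submodule.span ℤ (Set.range (Pi.basisFun ℝ (Fin n)))
  let e : (Fin n → ℤ) → L := fun j => ⟨fun i => (j i : ℝ), by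
    have : (fun i => (j i : ℝ)) = ∑ i, j i • Pi.basisFun ℝ (Fin n) i := by
      ext i
      simp [Pi.single_apply]
    rw [this]
    exact Submodule.sum_mem _ fun i _ =>
      Submodule.smul_mem _ _ (Submodule.subset_span (Set.mem_range_self i))⟩
  have he : Function.Injective e := by
    intro j j' h
    ext i
    have h' : (j i : ℝ) = (j' i : ℝ) := congrFun (congrArg Subtype.val h) i
    exact_mod_cast h'
  have hnorm : ∀ j, ‖e j‖ = ‖j‖ := norm_intCast_pi
  have hrank : Module.finrank ℤ L = n := by
    rw [ZLattice.rank ℝ L]; simp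
  have hs := (ZLattice.summable_norm_rpow L (-(n + 1 : ℕ))
    (by rw [hrank]; push_cast; linarith)).comp_injective he
  refine Summable.of_norm_bounded_eventually hs ?_
  rw [Filter.eventually_cofinite]
  refine (Set.finite_singleton (0 : Fin n → ℤ)).subset fun j hj => ?_
  by_contra h0
  apply hj
  have hpos : 0 < ‖j‖ := norm_pos_iff.2 h0
  simp only [Function.comp_apply, hnorm]
  rw [Real.rpow_neg hpos.le, Real.rpow_natCast, Real.norm_of_nonneg (by positivity)]
  gcongr
  linarith

/-- The lattice point `j / 4`. -/
def quarterPoint {n : ℕ} (j : Fin n → ℤ) : Fin n → ℝ := fun i => (j i : ℝ) / 4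

lemma norm_quarterPoint {n : ℕ} (j : Fin n → ℤ) : ‖quarterPoint j‖ = ‖j‖ / 4 := by
  have h : quarterPoint j = (1 / 4 : ℝ) • fun i => (j i : ℝ) := by
    ext i
    simp [quarterPoint]
    ring
  rw [h, norm_smul, norm_intCast_pi]
  norm_num
  ring

/-- A family of pairs of Schwartz functions `g i`, `h i`, growing polynomially in a weight `w`,
such that every Schwartz function is the sum of the `(∫ g i * f) • h i`, with coefficients that
decay faster than any power of the weight. -/
structure SchwartzFrame (n : ℕ) where
  /-- The index set. -/
  ι : Type
  /-- The weight. -/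
  w : ι → ℝ
  one_le_w : ∀ i, 1 ≤ w i
  /-- An exponent that makes the inverse powers of the weight summable. -/
  s : ℕ
  summable_w : Summable fun i => (w i ^ s)⁻¹
  /-- The analysing functions. -/
  g : ι → 𝓢(Fin n → ℝ, ℂ)
  /-- The synthesising functions. -/
  h : ι → 𝓢(Fin n → ℝ, ℂ)
  bound_g : ∀ q l : ℕ, ∃ (A : ℝ) (N : ℕ), 0 ≤ A ∧ ∀ i, ∀ a ≤ l, ∀ x,
    (1 + ‖x‖) ^ q * ‖iteratedFDeriv ℝ a (g i) x‖ ≤ A * w i ^ N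
  bound_h : ∀ q l : ℕ, ∃ (A : ℝ) (N : ℕ), 0 ≤ A ∧ ∀ i, ∀ a ≤ l, ∀ x,
    (1 + ‖x‖) ^ q * ‖iteratedFDeriv ℝ a (h i) x‖ ≤ A * w i ^ N
  bound_coeff : ∀ M : ℕ, ∃ C : ℝ, 0 ≤ C ∧ ∀ (f : 𝓢(Fin n → ℝ, ℂ)) (B : ℝ),
    (∀ a ≤ M, ∀ x, (1 + ‖x‖) ^ M * ‖iteratedFDeriv ℝ a f x‖ ≤ B) →
    ∀ i, ‖∫ y, g i y * f y‖ ≤ C * B * (w i ^ M)⁻¹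
  hasSum : ∀ (f : 𝓢(Fin n → ℝ, ℂ)) z, HasSum (fun i => (∫ y, g i y * f y) * h i z) (f z)

/-- `cutoffPi` as a Schwartz function. -/
def cutoffSchwartz (n : ℕ) : 𝓢(Fin n → ℝ, ℂ) :=
  hasCompactSupport_cutoffPi.toSchwartzMap contDiff_cutoffPi

lemma exists_schwartz_bump (n : ℕ) : ∃ φ : 𝓢(Fin n → ℝ, ℂ),
    (∀ u, ‖u‖ ≤ 1 / 4 → φ u = 1) ∧ ∀ u, 1 / 2 ≤ ‖u‖ → φ u = 0 := by
  let b : ContDiffBump (0 : Fin n → ℝ) := ⟨1 / 4, 1 / 2, by norm_num, by norm_num⟩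
  have hc : HasCompactSupport fun u => ((b u : ℝ) : ℂ) :=
    b.hasCompactSupport.comp_left Complex.ofReal_zero
  have hs : ContDiff ℝ (⊤ : ℕ∞) fun u => ((b u : ℝ) : ℂ) :=
    Complex.ofRealCLM.contDiff.comp b.contDiff
  refine ⟨hc.toSchwartzMap hs, fun u hu => ?_, fun u hu => ?_⟩
  · change ((b u : ℝ) : ℂ) = 1
    rw [b.one_of_mem_closedBall (by simpa [b] using hu), Complex.ofReal_one]
  · change ((b u : ℝ) : ℂ) = 0
    rw [b.zero_of_le_dist (by simpa [b] using hu), Complex.ofReal_zero]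

lemma modulateTranslate_apply {n : ℕ} (φ : 𝓢(Fin n → ℝ, ℂ)) (k : Fin n → ℤ) (b z : Fin n → ℝ) :
    modulateTranslate φ k b z = φ (z - b) * intChar k (z - b) := rfl

lemma integral_modulateTranslate_mul {n : ℕ} (φ : 𝓢(Fin n → ℝ, ℂ)) (k : Fin n → ℤ)
    (b : Fin n → ℝ) (f : (Fin n → ℝ) → ℂ) :
    ∫ y, modulateTranslate φ k b y * f y = ∫ u, intChar k u * (φ u * f (u + b)) := by
  rw [← integral_add_right_eq_self _ b]
  refine integral_congr_ae (ae_of_all _ fun u => ?_)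
  simp only [modulateTranslate_apply, add_sub_cancel_right]
  ring

lemma exists_bound_modulateTranslate_quarterPoint {n : ℕ} (φ : 𝓢(Fin n → ℝ, ℂ)) (q l : ℕ) :
    ∃ A, 0 ≤ A ∧ ∀ (j k : Fin n → ℤ), ∀ a ≤ l, ∀ x,
      (1 + ‖x‖) ^ q * ‖iteratedFDeriv ℝ a (modulateTranslate φ k (quarterPoint j)) x‖ ≤
        A * ((1 + ‖j‖) * (1 + ‖k‖)) ^ (q + l) := by
  obtain ⟨A, hA0, hA⟩ := exists_bound_modulate_translate φ q l
  refine ⟨A, hA0, fun j k a ha x => (hA k (quarterPoint j) a ha x).trans ?_⟩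
  have : ‖quarterPoint j‖ ≤ ‖j‖ := by
    rw [norm_quarterPoint]
    linarith [norm_nonneg j]
  gcongr

lemma exists_bound_frame_coeff {n : ℕ} (hn : 1 ≤ n) (χ : 𝓢(Fin n → ℝ, ℂ)) (M : ℕ) :
    ∃ C, 0 ≤ C ∧ ∀ (f : 𝓢(Fin n → ℝ, ℂ)) (B : ℝ),
      (∀ a ≤ M, ∀ x, (1 + ‖x‖) ^ M * ‖iteratedFDeriv ℝ a f x‖ ≤ B) →
      ∀ j k : Fin n → ℤ, ‖∫ y, modulateTranslate χ (-k) (quarterPoint j) y * f y‖ ≤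
        C * B * (((1 + ‖j‖) * (1 + ‖k‖)) ^ M)⁻¹ := by
  obtain ⟨C, hC0, hC⟩ := exists_bound_fourier_coeff hn χ M
  refine ⟨4 ^ M * C, by positivity, fun f B hB j k => ?_⟩
  have hB0 : 0 ≤ B := le_trans (by positivity) (hB 0 (Nat.zero_le _) 0)
  rw [integral_modulateTranslate_mul]
  refine (hC f B hB k (quarterPoint j)).trans ?_
  have h1 : 1 + ‖j‖ ≤ 4 * (1 + ‖quarterPoint j‖) := by
    rw [norm_quarterPoint]
    linarith
  have h2 : ((1 + ‖j‖) * (1 + ‖k‖)) ^ M ≤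
      4 ^ M * ((1 + ‖quarterPoint j‖) * (1 + ‖k‖)) ^ M := by
    rw [← mul_pow, ← mul_assoc]
    gcongr
  calc C * B * (((1 + ‖quarterPoint j‖) * (1 + ‖k‖)) ^ M)⁻¹
      = 4 ^ M * C * B * (4 ^ M * ((1 + ‖quarterPoint j‖) * (1 + ‖k‖)) ^ M)⁻¹ := by
        field_simp
    _ ≤ _ := by gcongr

lemma summable_weight (n : ℕ) : Summable fun i : (Fin n → ℤ) × (Fin n → ℤ) =>
    (((1 + ‖i.1‖) * (1 + ‖i.2‖)) ^ (n + 1))⁻¹ := by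
  have h := summable_one_add_norm_pow_inv n
  refine (h.mul_of_nonneg h (fun j => by positivity) fun j => by positivity).congr fun i => ?_
  rw [mul_pow, mul_inv]

/-- The Gabor-type frame built from a partition of unity and local Fourier series. -/
lemma nonempty_schwartzFrame {n : ℕ} (hn : 1 ≤ n) : Nonempty (SchwartzFrame n) := by
  obtain ⟨φ, hφ1, hφ0⟩ := exists_schwartz_bump n
  set χ := cutoffSchwartz n with hχ
  have hw : ∀ i : (Fin n → ℤ) × (Fin n → ℤ), 1 ≤ (1 + ‖i.1‖) * (1 + ‖i.2‖) := fun i =>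
    one_le_mul_of_one_le_of_one_le (by simp) (by simp)
  refine ⟨{
    ι := (Fin n → ℤ) × (Fin n → ℤ)
    w := fun i => (1 + ‖i.1‖) * (1 + ‖i.2‖)
    one_le_w := hw
    s := n + 1
    summable_w := summable_weight n
    g := fun i => modulateTranslate χ (-i.2) (quarterPoint i.1)
    h := fun i => modulateTranslate φ i.2 (quarterPoint i.1)
    bound_g := ?_
    bound_h := ?_
    bound_coeff := ?_
    hasSum := ?_ }⟩
  · intro q l
    obtain ⟨A, hA0, hA⟩ := exists_bound_modulateTranslate_quarterPoint χ q l
    exact ⟨A, q + l, hA0, fun i a ha x => by simpa using hA i.1 (-i.2) a ha x⟩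
  · intro q l
    obtain ⟨A, hA0, hA⟩ := exists_bound_modulateTranslate_quarterPoint φ q l
    exact ⟨A, q + l, hA0, fun i a ha x => hA i.1 i.2 a ha x⟩
  · intro M
    obtain ⟨C, hC0, hC⟩ := exists_bound_frame_coeff hn χ M
    exact ⟨C, hC0, fun f B hB i => hC f B hB i.1 i.2⟩
  · intro f z
    obtain ⟨C, hC0, hC⟩ := exists_bound_frame_coeff hn χ (n + 1)
    obtain ⟨B, hB0, hB⟩ := f.exists_bound (n + 1) (n + 1)
    obtain ⟨A, hA0, hA⟩ := exists_bound_modulateTranslate_quarterPoint φ 0 0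
    have hcoeff : Summable fun i : (Fin n → ℤ) × (Fin n → ℤ) =>
        ∫ y, modulateTranslate χ (-i.2) (quarterPoint i.1) y * f y :=
      Summable.of_norm_bounded ((summable_weight n).mul_left (C * B))
        fun i => hC f B hB i.1 i.2
    have hsum : Summable fun i : (Fin n → ℤ) × (Fin n → ℤ) =>
        (∫ y, modulateTranslate χ (-i.2) (quarterPoint i.1) y * f y) *
          modulateTranslate φ i.2 (quarterPoint i.1) z := by
      refine Summable.of_norm_bounded (((summable_weight n).mul_left (C * B)).mul_right A)
        fun i => ?_
      rw [norm_mul]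
      have h1 : ‖modulateTranslate φ i.2 (quarterPoint i.1) z‖ ≤ A := by
        simpa using hA i.1 i.2 0 le_rfl z
      gcongr
      exact hC f B hB i.1 i.2
    have hfib : ∀ j : Fin n → ℤ, HasSum (fun k : Fin n → ℤ =>
        (∫ y, modulateTranslate χ (-k) (quarterPoint j) y * f y) *
          modulateTranslate φ k (quarterPoint j) z) (cutoffPi (z - quarterPoint j) * f z) := by
      intro j
      set u := z - quarterPoint j with hu
      simp only [modulateTranslate_apply φ, ← hu]
      rcases lt_or_ge ‖u‖ (1 / 2) with hlt | hge
      · have hk : Summable fun k : Fin n → ℤ =>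
            ∫ y, intChar (-k) y * (χ y * f (y + quarterPoint j)) := by
          have := hcoeff.comp_injective (Prod.mk_right_injective j)
          simpa only [Function.comp_def, integral_modulateTranslate_mul] using this
        have key := (hasSum_intChar_of_support (fun v => χ v * f (v + quarterPoint j))
          (χ.continuous.mul (f.continuous.comp (continuous_id.add continuous_const)))
          (fun v hv => norm_le_of_cutoffPi_ne_zero (left_ne_zero_of_mul hv)) hk u hlt).mul_left (φ u)
        have hval : φ u * (χ u * f (u + quarterPoint j)) = cutoffPi u * f z := by
          rw [hu, sub_add_cancel, ← hu, ← mul_assoc]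
          congr 1
          change φ u * cutoffPi u = cutoffPi u
          by_cases h0 : cutoffPi u = 0
          · rw [h0, mul_zero]
          · rw [hφ1 u (norm_le_of_cutoffPi_ne_zero h0), one_mul]
        rw [hval] at key
        refine key.congr_fun fun k => ?_
        rw [integral_modulateTranslate_mul]
        ring
      · have h0 : cutoffPi u = 0 := by
          by_contra h0
          linarith [norm_le_of_cutoffPi_ne_zero h0]
        simp only [h0, hφ0 u hge, zero_mul, mul_zero]
        exact hasSum_zero
    have h1 := hsum.hasSum.prod_fiberwise hfib
    have h2 := (hasSum_cutoffPi_sub z).mul_right (f z)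
    rw [one_mul] at h2
    have h3 := h1.unique h2
    rw [← h3]
    exact hsum.hasSum

namespace SchwartzFrame

variable {n : ℕ} (F : SchwartzFrame n)

lemma w_pos (i : F.ι) : 0 < F.w i := zero_lt_one.trans_le (F.one_le_w i)

lemma finite_setOf_w_le (R : ℝ) : {i | F.w i ≤ R}.Finite := by
  have h0 : (0 : ℝ) < (max R 1 ^ F.s)⁻¹ := by positivity
  have h := F.summable_w.tendsto_cofinite_zero.eventually (gt_mem_nhds h0)
  rw [eventually_cofinite] at h
  refine h.subset fun i hi => ?_
  have hw := F.w_pos i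
  have hle : F.w i ≤ max R 1 := le_trans hi (le_max_left _ _)
  simp only [Set.mem_ofPred_eq, not_lt]
  gcongr

/-- The finitely many indices of weight at most `R`. -/
def low (R : ℝ) : Finset F.ι := (F.finite_setOf_w_le R).toFinset

lemma mem_low {R : ℝ} {i : F.ι} : i ∈ F.low R ↔ F.w i ≤ R := by
  simp [low]

lemma sum_low_le (N : ℕ) {R : ℝ} (hR : 0 ≤ R) :
    ∑ i ∈ F.low R, F.w i ^ N ≤ R ^ (N + F.s) * ∑' i, (F.w i ^ F.s)⁻¹ := by
  calc ∑ i ∈ F.low R, F.w i ^ N ≤ ∑ i ∈ F.low R, R ^ (N + F.s) * (F.w i ^ F.s)⁻¹ := by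
        refine Finset.sum_le_sum fun i hi => ?_
        have hw := F.w_pos i
        rw [← div_eq_mul_inv, le_div_iff₀ (by positivity), ← pow_add]
        exact pow_le_pow_left₀ hw.le (F.mem_low.1 hi) _
    _ = R ^ (N + F.s) * ∑ i ∈ F.low R, (F.w i ^ F.s)⁻¹ := by rw [Finset.mul_sum]
    _ ≤ _ := by
        gcongr
        exact F.summable_w.sum_le_tsum _ fun i _ => by have := F.w_pos i; positivity

/-- The partial sum of the frame expansion of `f` over the weights at most `R`. -/
def truncate (R : ℝ) (f : 𝓢(Fin n → ℝ, ℂ)) : 𝓢(Fin n → ℝ, ℂ) :=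
  ∑ i ∈ F.low R, (∫ y, F.g i y * f y) • F.h i

lemma exists_bound_truncate_sub (q l P : ℕ) : ∃ (M : ℕ) (K : ℝ), 0 ≤ K ∧
    ∀ (f : 𝓢(Fin n → ℝ, ℂ)) (B R : ℝ), 0 < R →
    (∀ a ≤ M, ∀ x, (1 + ‖x‖) ^ M * ‖iteratedFDeriv ℝ a f x‖ ≤ B) →
    ∀ a ≤ l, ∀ x, (1 + ‖x‖) ^ q * ‖iteratedFDeriv ℝ a (F.truncate R f - f : 𝓢(Fin n → ℝ, ℂ)) x‖ ≤
      K * B * (R ^ P)⁻¹ := by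
  obtain ⟨A, N, hA0, hA⟩ := F.bound_h q l
  obtain ⟨C, hC0, hC⟩ := F.bound_coeff (N + (F.s + P))
  set S := ∑' i, (F.w i ^ F.s)⁻¹ with hS
  have hS0 : 0 ≤ S := tsum_nonneg fun i => by have := F.w_pos i; positivity
  refine ⟨N + (F.s + P), C * A * S, by positivity, fun f B R hR hB a ha x => ?_⟩
  have hB0 : 0 ≤ B := le_trans (by positivity) (hB 0 (Nat.zero_le _) 0)
  set c : F.ι → ℂ := fun i => ∫ y, F.g i y * f y with hc
  set u : F.ι → 𝓢(Fin n → ℝ, ℂ) := fun i => c i • F.h i with hu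
  have hcd : ∀ (φ : 𝓢(Fin n → ℝ, ℂ)) (k : ℕ∞), ContDiff ℝ k φ := fun φ k => φ.smooth k
  have hub : ∀ i, ∀ k ≤ l, ∀ x, (1 + ‖x‖) ^ q * ‖iteratedFDeriv ℝ k (u i) x‖ ≤
      C * A * B * (F.w i ^ (F.s + P))⁻¹ := by
    intro i k hk x
    have hw := F.w_pos i
    have h1 : iteratedFDeriv ℝ k (u i) x = c i • iteratedFDeriv ℝ k (F.h i) x :=
      iteratedFDeriv_const_smul_apply (hcd (F.h i) k).contDiffAt
    rw [h1, norm_smul, mul_left_comm]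
    calc ‖c i‖ * ((1 + ‖x‖) ^ q * ‖iteratedFDeriv ℝ k (F.h i) x‖)
        ≤ (C * B * (F.w i ^ (N + (F.s + P)))⁻¹) * (A * F.w i ^ N) := by
          exact mul_le_mul (hC f B hB i) (hA i k hk x) (by positivity) (by positivity)
      _ = _ := by
          rw [pow_add]
          field_simp
  have hsP : Summable fun i => C * A * B * (F.w i ^ (F.s + P))⁻¹ := by
    refine (Summable.of_nonneg_of_le (fun i => ?_) (fun i => ?_) F.summable_w).mul_left _
    · have := F.w_pos i
      positivity
    · have := F.w_pos i
      gcongr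
      · exact F.one_le_w i
      · omega
  have hub' : ∀ (k : ℕ) i x, (k : ℕ∞) ≤ (l : ℕ∞) →
      ‖iteratedFDeriv ℝ k (u i) x‖ ≤ C * A * B * (F.w i ^ (F.s + P))⁻¹ := by
    intro k i x hk
    refine le_trans ?_ (hub i k (by exact_mod_cast hk) x)
    exact le_mul_of_one_le_left (norm_nonneg _) (one_le_pow₀ (by simp))
  have hal : (a : ℕ∞) ≤ (l : ℕ∞) := by exact_mod_cast ha
  have hf : (f : (Fin n → ℝ) → ℂ) = fun z => ∑' i, u i z := by
    ext z
    exact (F.hasSum f z).tsum_eq.symm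
  have hfa : HasSum (fun i => iteratedFDeriv ℝ a (u i) x) (iteratedFDeriv ℝ a f x) := by
    rw [hf, iteratedFDeriv_tsum_apply (N := l) (v := fun _ i => C * A * B * (F.w i ^ (F.s + P))⁻¹)
      (fun i => hcd (u i) l) (fun _ _ => hsP) hub' hal x]
    exact (Summable.of_norm_bounded hsP fun i => hub' a i x hal).hasSum
  have htr : iteratedFDeriv ℝ a (F.truncate R f) x =
      ∑ i ∈ F.low R, iteratedFDeriv ℝ a (u i) x := by
    rw [← iteratedFDeriv_fun_sum_apply fun i _ => (hcd (u i) a).contDiffAt]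
    congr 1
    ext z
    simp [truncate, hu, hc]
  classical
  have hlow : HasSum (fun i => if i ∈ F.low R then iteratedFDeriv ℝ a (u i) x else 0)
      (∑ i ∈ F.low R, iteratedFDeriv ℝ a (u i) x) := by
    rw [← Finset.sum_congr rfl fun i hi => if_pos hi]
    exact hasSum_sum_of_ne_finset_zero fun i hi => if_neg hi
  have hsub : iteratedFDeriv ℝ a (F.truncate R f - f : 𝓢(Fin n → ℝ, ℂ)) x =
      iteratedFDeriv ℝ a (F.truncate R f) x - iteratedFDeriv ℝ a f x :=
    iteratedFDeriv_sub_apply (hcd _ a).contDiffAt (hcd _ a).contDiffAt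
  rw [hsub, htr, mul_comm, ← le_div_iff₀ (by positivity)]
  have hmaj : HasSum (fun i => C * A * B * (R ^ P)⁻¹ / (1 + ‖x‖) ^ q * (F.w i ^ F.s)⁻¹)
      (C * A * B * (R ^ P)⁻¹ / (1 + ‖x‖) ^ q * S) := F.summable_w.hasSum.mul_left _
  refine ((hlow.sub hfa).norm_le_of_bounded hmaj fun i => ?_).trans_eq (by ring)
  have hw := F.w_pos i
  split_ifs with hi
  · rw [sub_self, norm_zero]
    positivity
  · rw [zero_sub, norm_neg, div_mul_eq_mul_div, le_div_iff₀ (by positivity), mul_comm]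
    refine (hub i a ha x).trans ?_
    rw [F.mem_low, not_le] at hi
    rw [pow_add, mul_inv, mul_comm (F.w i ^ F.s)⁻¹, ← mul_assoc]
    gcongr

end SchwartzFrame

lemma mu_le_ofReal_iff {E : Type*} [NormedAddCommGroup E] [NormedSpace ℝ E] {r : ℤ} {l : ℕ}
    {f : E → ℂ} {B : ℝ} (hB : 0 ≤ B) : mu r l f ≤ ENNReal.ofReal B ↔
      ∀ a ≤ l, ∀ x, (1 + ‖x‖) ^ r * ‖iteratedFDeriv ℝ a f x‖ ≤ B := by
  simp only [mu, iSup_le_iff, ENNReal.ofReal_le_ofReal_iff hB]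
  exact ⟨fun h a ha x => h x a ha, fun h x a ha => h a ha x⟩

lemma mu_le_of_le_mul_mu {E E' : Type*} [NormedAddCommGroup E] [NormedSpace ℝ E]
    [NormedAddCommGroup E'] [NormedSpace ℝ E'] {r : ℤ} {l q l' : ℕ} {φ : E → ℂ} {f : E' → ℂ}
    {B K : ℝ} (hB : 0 ≤ B) (h : mu r l φ ≤ ENNReal.ofReal B * mu q l' f)
    (hf : ∀ a ≤ l', ∀ x, (1 + ‖x‖) ^ q * ‖iteratedFDeriv ℝ a f x‖ ≤ K) :
    mu r l φ ≤ ENNReal.ofReal (B * K) := by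
  have hK : 0 ≤ K := le_trans (by positivity) (hf 0 (Nat.zero_le _) 0)
  rw [ENNReal.ofReal_mul hB]
  refine h.trans ?_
  gcongr
  rw [mu_le_ofReal_iff hK]
  simpa only [zpow_natCast] using hf

lemma norm_iteratedFDeriv_comp_fst_le {E E' : Type*} [NormedAddCommGroup E] [NormedSpace ℝ E]
    [NormedAddCommGroup E'] [NormedSpace ℝ E'] {f : E → ℂ} (hf : ContDiff ℝ (⊤ : ℕ∞) f)
    (i : ℕ) (z : E × E') :
    ‖iteratedFDeriv ℝ i (fun z : E × E' => f z.1) z‖ ≤ ‖iteratedFDeriv ℝ i f z.1‖ :=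
  (norm_iteratedFDeriv_comp_clm_le (ContinuousLinearMap.fst ℝ E E') hf i z).trans
    (mul_le_of_le_one_right (norm_nonneg _) (pow_le_one₀ (norm_nonneg _)
      (ContinuousLinearMap.norm_fst_le ℝ E E')))

lemma norm_iteratedFDeriv_comp_snd_le {E E' : Type*} [NormedAddCommGroup E] [NormedSpace ℝ E]
    [NormedAddCommGroup E'] [NormedSpace ℝ E'] {f : E' → ℂ} (hf : ContDiff ℝ (⊤ : ℕ∞) f)
    (i : ℕ) (z : E × E') :
    ‖iteratedFDeriv ℝ i (fun z : E × E' => f z.2) z‖ ≤ ‖iteratedFDeriv ℝ i f z.2‖ :=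
  (norm_iteratedFDeriv_comp_clm_le (ContinuousLinearMap.snd ℝ E E') hf i z).trans
    (mul_le_of_le_one_right (norm_nonneg _) (pow_le_one₀ (norm_nonneg _)
      (ContinuousLinearMap.norm_snd_le ℝ E E')))

namespace SchwartzFrame

variable {m n : ℕ} (F : SchwartzFrame n)

/-- The kernel of the finite-rank operator `f ↦ L (F.truncate R f)`. -/
def kernel (L : 𝓢(Fin n → ℝ, ℂ) →ₗ[ℂ] ((Fin m → ℝ) → ℂ)) (R : ℝ)
    (z : (Fin m → ℝ) × (Fin n → ℝ)) : ℂ :=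
  ∑ i ∈ F.low R, L (F.h i) z.1 * F.g i z.2

lemma contDiff_kernel {L : 𝓢(Fin n → ℝ, ℂ) →ₗ[ℂ] ((Fin m → ℝ) → ℂ)}
    (hL : ∀ f, ContDiff ℝ (⊤ : ℕ∞) (L f)) (R : ℝ) : ContDiff ℝ (⊤ : ℕ∞) (F.kernel L R) :=
  ContDiff.sum fun i _ => ((hL (F.h i)).comp contDiff_fst).mul
    (((F.g i).smooth ⊤).comp contDiff_snd)

lemma exists_mu_kernel_le (q l l' : ℕ) : ∃ (K : ℝ) (N : ℕ), 0 ≤ K ∧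
    ∀ (L : 𝓢(Fin n → ℝ, ℂ) →ₗ[ℂ] ((Fin m → ℝ) → ℂ)) (B R : ℝ) (p : ℕ),
      (∀ f, ContDiff ℝ (⊤ : ℕ∞) (L f)) → 0 ≤ B → 0 ≤ R →
      (∀ f, mu (-(p : ℤ)) l (L f) ≤ ENNReal.ofReal B * mu (q : ℤ) l' f) →
      mu (-(p : ℤ)) l (F.kernel L R) ≤ ENNReal.ofReal (K * B * R ^ N) := by
  obtain ⟨A, N, hA0, hA⟩ := F.bound_h q l'
  obtain ⟨A', N', hnonneg', hA'⟩ := F.bound_g 0 l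
  set S := ∑' i, (F.w i ^ F.s)⁻¹ with hS
  have hS0 : 0 ≤ S := tsum_nonneg fun i => by have := F.w_pos i; positivity
  refine ⟨2 ^ l * A * A' * S, N + N' + F.s, by positivity, fun L B R p hL hB hR hLB => ?_⟩
  rw [mu_le_ofReal_iff (by positivity)]
  intro a ha z
  rw [zpow_neg, zpow_natCast, inv_mul_le_iff₀ (by positivity)]
  have hsm : ∀ i, ContDiff ℝ (⊤ : ℕ∞) fun z : (Fin m → ℝ) × (Fin n → ℝ) => L (F.h i) z.1 :=
    fun i => (hL (F.h i)).comp contDiff_fst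
  have hgsm : ∀ i, ContDiff ℝ (⊤ : ℕ∞) fun z : (Fin m → ℝ) × (Fin n → ℝ) => F.g i z.2 :=
    fun i => ((F.g i).smooth ⊤).comp contDiff_snd
  have hL1 : ∀ i, ∀ k ≤ l, ‖iteratedFDeriv ℝ k
      (fun z : (Fin m → ℝ) × (Fin n → ℝ) => L (F.h i) z.1) z‖ ≤
        B * (A * F.w i ^ N) * (1 + ‖z‖) ^ p := by
    intro i k hk
    have hw := F.w_pos i
    have h1 := (mu_le_ofReal_iff (by positivity)).1
      (mu_le_of_le_mul_mu hB (hLB (F.h i)) (hA i)) k hk z.1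
    rw [zpow_neg, zpow_natCast, inv_mul_le_iff₀ (by positivity)] at h1
    refine (norm_iteratedFDeriv_comp_fst_le (hL (F.h i)) k z).trans (h1.trans ?_)
    rw [mul_comm]
    gcongr
    exact norm_fst_le z
  have hg1 : ∀ i, ∀ k ≤ l, ‖iteratedFDeriv ℝ k
      (fun z : (Fin m → ℝ) × (Fin n → ℝ) => F.g i z.2) z‖ ≤ A' * F.w i ^ N' := by
    intro i k hk
    refine (norm_iteratedFDeriv_comp_snd_le ((F.g i).smooth ⊤) k z).trans ?_
    simpa using hA' i k hk z.2
  have hker : iteratedFDeriv ℝ a (F.kernel L R) z = ∑ i ∈ F.low R, iteratedFDeriv ℝ a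
      (fun z : (Fin m → ℝ) × (Fin n → ℝ) => L (F.h i) z.1 * F.g i z.2) z :=
    iteratedFDeriv_fun_sum_apply fun i _ =>
      (((hsm i).mul (hgsm i)).of_le (by exact_mod_cast le_top)).contDiffAt
  rw [hker]
  refine (norm_sum_le _ _).trans ?_
  calc ∑ i ∈ F.low R, ‖iteratedFDeriv ℝ a
        (fun z : (Fin m → ℝ) × (Fin n → ℝ) => L (F.h i) z.1 * F.g i z.2) z‖
      ≤ ∑ i ∈ F.low R, (1 + ‖z‖) ^ p * (2 ^ l * A * A' * B) * F.w i ^ (N + N') := by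
        refine Finset.sum_le_sum fun i _ => ?_
        refine (norm_iteratedFDeriv_mul_le_of_le (hsm i) (hgsm i) ha (hL1 i) (hg1 i)).trans_eq ?_
        rw [pow_add]
        ring
    _ ≤ (1 + ‖z‖) ^ p * (2 ^ l * A * A' * B) * (R ^ (N + N' + F.s) * S) := by
        rw [← Finset.mul_sum]
        gcongr
        exact F.sum_low_le _ hR
    _ = _ := by ring

lemma integrable_g_mul (i : F.ι) (f : 𝓢(Fin n → ℝ, ℂ)) : Integrable fun y => F.g i y * f y := by
  obtain ⟨A, -, hA⟩ := (F.g i).exists_bound 0 0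
  refine f.integrable.bdd_mul (F.g i).continuous.aestronglyMeasurable (c := A)
    (ae_of_all _ fun y => ?_)
  simpa using hA 0 le_rfl y

lemma integrable_kernel_mul (L : 𝓢(Fin n → ℝ, ℂ) →ₗ[ℂ] ((Fin m → ℝ) → ℂ)) (R : ℝ)
    (f : 𝓢(Fin n → ℝ, ℂ)) (x : Fin m → ℝ) : Integrable fun y => F.kernel L R (x, y) * f y := by
  simp only [kernel, Finset.sum_mul, mul_assoc]
  exact integrable_finsetSum _ fun i _ => (F.integrable_g_mul i f).const_mul _

lemma integral_kernel_mul (L : 𝓢(Fin n → ℝ, ℂ) →ₗ[ℂ] ((Fin m → ℝ) → ℂ)) (R : ℝ)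
    (f : 𝓢(Fin n → ℝ, ℂ)) (x : Fin m → ℝ) :
    ∫ y, F.kernel L R (x, y) * f y = L (F.truncate R f) x := by
  simp only [kernel, Finset.sum_mul, mul_assoc]
  rw [integral_finsetSum _ fun i _ => (F.integrable_g_mul i f).const_mul _]
  simp only [integral_const_mul, truncate, map_sum, map_smul, Finset.sum_apply, Pi.smul_apply,
    smul_eq_mul]
  exact Finset.sum_congr rfl fun i _ => mul_comm _ _

end SchwartzFrame

end

/-- kernel theorem for moderate nets whose moderation constants grow like
`ε^{-r(l)}` with `limsup r(l)/l < 1`: the extension is represented on `E_S^∞(ℝ^n)` by a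
generalized integral operator with kernel in `E_τ(ℝ^{m+n})`. -/
theorem stmt16 (m n : ℕ) (hm : 1 ≤ m) (hn : 1 ≤ n)
    (L : ℝ → SchwartzMap (Fin n → ℝ) ℂ →ₗ[ℂ] ((Fin m → ℝ) → ℂ))
    (hL : ModerateNetMaps m n (fun ε => ⇑(L ε)))
    (hcont : ∀ ε ∈ Set.Ioc (0:ℝ) 1, ContinuousIntoOM m n ⇑(L ε))
    (r : ℕ → ℝ) (hr0 : ∀ l, 0 ≤ r l)
    (hr1 : Filter.limsup (fun l : ℕ => r l / (l:ℝ)) Filter.atTop < 1)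
    (hmod : ∀ l : ℕ, ∃ p q l' : ℕ, ∃ C ≥ (0:ℝ), ∃ η > (0:ℝ), ∀ ε : ℝ, 0 < ε → ε ≤ η →
      ∀ f : SchwartzMap (Fin n → ℝ) ℂ,
        mu (-(p:ℤ)) l (L ε f) ≤ ENNReal.ofReal (C * ε ^ (-(r l))) * mu (q:ℤ) l' ⇑f) :
    ∃ H : ℝ → ((Fin m → ℝ) × (Fin n → ℝ)) → ℂ, IsEtauNet H ∧
      ∀ f : ℝ → SchwartzMap (Fin n → ℝ) ℂ, IsESinfNet (fun ε => ⇑(f ε)) →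
        (∀ ε ∈ Set.Ioc (0:ℝ) 1, ∀ x : Fin m → ℝ,
          MeasureTheory.Integrable (fun y : Fin n → ℝ => H ε (x, y) * f ε y)) ∧
        IsNtauNet (fun ε (x : Fin m → ℝ) =>
          (∫ y : Fin n → ℝ, H ε (x, y) * f ε y) - L ε (f ε) x) := by
  obtain ⟨F⟩ := nonempty_schwartzFrame hn
  have hsm : ∀ ε ∈ Set.Ioc (0 : ℝ) 1, ∀ f, ContDiff ℝ (⊤ : ℕ∞) (L ε f) :=
    fun ε hε f => (hL.1 ε hε f).1
  have hdiff : ∀ (f : ℝ → SchwartzMap (Fin n → ℝ) ℂ) (ε : ℝ), (fun x : Fin m → ℝ =>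
      (∫ y, F.kernel (L ε) ε⁻¹ (x, y) * f ε y) - L ε (f ε) x) =
        L ε (F.truncate ε⁻¹ (f ε) - f ε) := by
    intro f ε
    ext x
    rw [F.integral_kernel_mul, map_sub, Pi.sub_apply]
  refine ⟨fun ε => F.kernel (L ε) ε⁻¹, ⟨fun ε hε => ⟨F.contDiff_kernel (hsm ε hε) _, fun l => ?_⟩,
    fun l => ?_⟩, fun f hf => ⟨fun ε _ x => F.integrable_kernel_mul (L ε) _ (f ε) x,
      fun ε hε => ?_, fun l => ?_⟩⟩
  · obtain ⟨C, hC, p, q, l', h⟩ := hcont ε hε l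
    obtain ⟨K, N, -, hK⟩ := F.exists_mu_kernel_le (m := m) q l l'
    exact ⟨p, (hK (L ε) C ε⁻¹ p (hsm ε hε) hC (inv_nonneg.2 hε.1.le) h).trans_lt
      ENNReal.ofReal_lt_top⟩
  · obtain ⟨C, hC, ⟨N, C₀, hC₀, η, hη, hCle⟩, p, q, l', η', hη', h⟩ := hL.2 l
    obtain ⟨K, N', hK0, hK⟩ := F.exists_mu_kernel_le (m := m) q l l'
    refine ⟨p, N + N', K * C₀ + 1, by positivity, min η (min η' 1), by positivity,
      fun ε hε hle => ?_⟩
    simp only [le_min_iff] at hle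
    refine (hK (L ε) (C ε) ε⁻¹ p (hsm ε ⟨hε, hle.2.2⟩) (hC ε) (inv_nonneg.2 hε.le)
      (h ε hε hle.2.1)).trans (ENNReal.ofReal_le_ofReal ?_)
    have hpow : ∀ k : ℕ, ε ^ (-(k : ℤ)) = ε⁻¹ ^ k := fun k => by
      rw [zpow_neg, zpow_natCast, inv_pow]
    have hCε := hCle ε hε hle.1
    rw [hpow] at hCε
    beta_reduce
    rw [hpow, pow_add]
    calc K * C ε * ε⁻¹ ^ N' ≤ K * (C₀ * ε⁻¹ ^ N) * ε⁻¹ ^ N' := by gcongr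
      _ = K * C₀ * (ε⁻¹ ^ N * ε⁻¹ ^ N') := by ring
      _ ≤ (K * C₀ + 1) * (ε⁻¹ ^ N * ε⁻¹ ^ N') := by
        gcongr
        linarith
  · simp only [hdiff]
    exact hL.1 ε hε _
  · obtain ⟨C, hC, ⟨N, C₀, hC₀, η, hη, hCle⟩, p, q, l', η', hη', h⟩ := hL.2 l
    obtain ⟨N', hN'⟩ := hf.2
    refine ⟨p, fun P => ?_⟩
    obtain ⟨M, K, hK0, hK⟩ := F.exists_bound_truncate_sub q l' (P + N + N')
    obtain ⟨C₁, hC₁, η₁, hη₁, hf₁⟩ := hN' M M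
    refine ⟨C₀ * (K * C₁) + 1, by positivity, min η (min η' η₁), by positivity,
      fun ε hε hle => ?_⟩
    simp only [le_min_iff] at hle
    simp only [hdiff]
    have hB := (mu_le_ofReal_iff (by positivity)).1 (hf₁ ε hε hle.2.2)
    simp only [zpow_natCast] at hB
    refine (mu_le_of_le_mul_mu (hC ε) (h ε hε hle.2.1 _)
      (hK (f ε) _ ε⁻¹ (inv_pos.2 hε) hB)).trans (ENNReal.ofReal_le_ofReal ?_)
    calc C ε * (K * (C₁ * ε ^ (-(N' : ℤ))) * (ε⁻¹ ^ (P + N + N'))⁻¹)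
        ≤ C₀ * ε ^ (-(N : ℤ)) * (K * (C₁ * ε ^ (-(N' : ℤ))) * (ε⁻¹ ^ (P + N + N'))⁻¹) := by
          gcongr
          exact hCle ε hε hle.1
      _ = C₀ * (K * C₁) * ε ^ P := by
          rw [zpow_neg, zpow_neg, zpow_natCast, zpow_natCast, inv_pow, inv_inv, pow_add, pow_add]
          field_simp
      _ ≤ (C₀ * (K * C₁) + 1) * ε ^ P := by
          gcongr
          linarith
end

section
/- Let m, n ≥ 1, let Λ : 𝓢(ℝ^n) → 𝓢'(ℝ^m) be a continuous linear map into the space of tempered distributions, let s ∈ (0,1), let φ ∈ 𝓢(ℝ^m), and for ε ∈ (0,1] define L_ε : 𝓢(ℝ^n) → C^∞(ℝ^m) by L_ε(f)(x) = (Λ(f) ∗ φ_{ε^s})(x) = Λ(f)(y ↦ φ_{ε^s}(x−y)). Then each L_ε(f) is smooth with temperate growth, each L_ε is continuous into O_M(ℝ^m), and there exist p, q, l₁, l₂ ∈ ℕ such that for every l ∈ ℕ there exists C ≥ 0 with μ_{-p,l}(L_ε(f)) ≤ C ε^{-s(m+l₂+l)} μ_{q,l₁}(f) for all f ∈ 𝓢(ℝ^n)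 and all ε small enough; in particular (L_ε)_{ε∈(0,1]} is L_{0,c}-strongly moderate for every c ∈ (s,1]. -/
open MeasureTheory Filter

section SchwartzEstimates

open SchwartzMap LineDeriv Topology

variable {E : Type*} [NormedAddCommGroup E] [NormedSpace ℝ E]

/-- The supremum of the Schwartz seminorms with decay and differentiation orders at most `k`. -/
noncomputable def schwartzSup (E : Type*) [NormedAddCommGroup E] [NormedSpace ℝ E] (k : ℕ) :
    Seminorm ℂ (SchwartzMap E ℂ) :=
  (Finset.Iic (k, k)).sup (fun m => SchwartzMap.seminorm ℂ m.1 m.2)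

theorem seminorm_le_schwartzSup {a b k : ℕ} (ha : a ≤ k) (hb : b ≤ k) (f : SchwartzMap E ℂ) :
    SchwartzMap.seminorm ℂ a b f ≤ schwartzSup E k f :=
  Finset.le_sup (f := fun m : ℕ × ℕ => (SchwartzMap.seminorm ℂ m.1 m.2 :
    Seminorm ℂ (SchwartzMap E ℂ))) (b := (a, b))
    (Finset.mem_Iic.2 (Prod.mk_le_mk.2 ⟨ha, hb⟩)) f

theorem weight_mul_norm_iteratedFDeriv_le {k i : ℕ} (hi : i ≤ k) (f : SchwartzMap E ℂ) (x : E) :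
    (1 + ‖x‖) ^ k * ‖iteratedFDeriv ℝ i f x‖ ≤ 2 ^ k * schwartzSup E k f :=
  SchwartzMap.one_add_le_sup_seminorm_apply (𝕜 := ℂ) (m := (k, k)) le_rfl hi f x

theorem schwartzSup_le {k : ℕ} {f : SchwartzMap E ℂ} {M : ℝ} (hM : 0 ≤ M)
    (h : ∀ i ≤ k, ∀ x, (1 + ‖x‖) ^ k * ‖iteratedFDeriv ℝ i f x‖ ≤ M) :
    schwartzSup E k f ≤ M := by
  refine Seminorm.finset_sup_apply_le hM fun m hm => ?_
  obtain ⟨h1, h2⟩ := Finset.mem_Iic.1 hm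
  refine SchwartzMap.seminorm_le_bound ℂ _ _ _ hM fun x => le_trans ?_ (h m.2 h2 x)
  gcongr
  calc ‖x‖ ^ m.1 ≤ (1 + ‖x‖) ^ m.1 := by gcongr; linarith
    _ ≤ (1 + ‖x‖) ^ k := pow_le_pow_right₀ (by linarith [norm_nonneg x]) h1

/-- A continuous linear map from Schwartz space into the strong dual of another Schwartz space
defines a bilinear form that is jointly bounded by Schwartz seminorms. -/
theorem exists_bound_of_continuous_bilinear {F : Type*} [NormedAddCommGroup F]
    [NormedSpace ℝ F]
    (Λ : SchwartzMap F ℂ →L[ℂ] (SchwartzMap E ℂ →L[ℂ] ℂ)) :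
    ∃ k : ℕ, ∃ C : ℝ, 0 ≤ C ∧ ∀ f g, ‖Λ f g‖ ≤ C * schwartzSup F k f * schwartzSup E k g := by
  obtain ⟨k, hk⟩ : ∃ k : ℕ, ∀ f g, schwartzSup F k f ≤ 1 / ((k : ℝ) + 1) →
      schwartzSup E k g ≤ 1 → ‖Λ f g‖ ≤ 1 := by
    by_contra! hcon
    choose f g hf hg hfg using hcon
    have hbdd : Bornology.IsVonNBounded ℂ (Set.range g) := by
      rw [(schwartz_withSeminorms ℂ E ℂ).isVonNBounded_iff_seminorm_bounded]
      rintro ⟨a, b⟩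
      obtain ⟨M, hM⟩ := (Set.finite_range (fun j : Fin (max a b) =>
        SchwartzMap.seminorm ℂ a b (g j))).bddAbove
      refine ⟨max M 1 + 1, by positivity, ?_⟩
      rintro _ ⟨j, rfl⟩
      refine lt_of_le_of_lt ?_ (lt_add_one _)
      by_cases hj : j < max a b
      · exact le_max_of_le_left (hM ⟨⟨j, hj⟩, rfl⟩)
      · refine le_max_of_le_right (le_trans ?_ (hg j))
        push Not at hj
        have hab := max_le_iff.1 hj
        exact seminorm_le_schwartzSup hab.1 hab.2 (g j)
    have hlim : Tendsto f atTop (𝓝 0) := by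
      rw [(schwartz_withSeminorms ℂ F ℂ).tendsto_nhds_atTop]
      rintro ⟨a, b⟩ δ hδ
      obtain ⟨N, hN⟩ := exists_nat_one_div_lt hδ
      refine ⟨max N (max a b), fun j hj => ?_⟩
      rw [sub_zero]
      have hj1 : N ≤ j := le_trans (le_max_left _ _) hj
      have hab := max_le_iff.1 (le_trans (le_max_right _ _) hj)
      refine lt_of_le_of_lt ?_ hN
      calc _ ≤ schwartzSup F j (f j) := seminorm_le_schwartzSup hab.1 hab.2 (f j)
        _ ≤ 1 / ((j : ℝ) + 1) := hf j
        _ ≤ 1 / ((N : ℝ) + 1) := by gcongr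
    have hΛ : Tendsto (fun j => Λ (f j)) atTop (𝓝 0) := by
      simpa [Function.comp_def] using (Λ.continuous.tendsto 0).comp hlim
    have := (ContinuousLinearMap.hasBasis_nhds_zero_of_basis (σ := RingHom.id ℂ)
      (E := SchwartzMap E ℂ) (Metric.nhds_basis_ball (x := (0 : ℂ)))).tendsto_right_iff.1 hΛ
      (Set.range g, 1) ⟨hbdd, one_pos⟩
    obtain ⟨j, hj⟩ := this.exists
    have := hj (g j) ⟨j, rfl⟩
    rw [mem_ball_zero_iff] at this
    exact absurd this (not_lt.2 (hfg j).le)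
  refine ⟨k, k + 1, by positivity, fun f g => ?_⟩
  have key : ∀ a b : ℝ, schwartzSup F k f < a → schwartzSup E k g < b →
      ‖Λ f g‖ ≤ ((k : ℝ) + 1) * a * b := by
    intro a b ha hb
    have ha0 : 0 < a := lt_of_le_of_lt (apply_nonneg _ _) ha
    have hb0 : 0 < b := lt_of_le_of_lt (apply_nonneg _ _) hb
    have := hk (((((k : ℝ) + 1) * a : ℝ) : ℂ)⁻¹ • f) (((b : ℂ))⁻¹ • g) ?_ ?_
    · rw [map_smul, map_smul, smul_apply, norm_smul, norm_smul, norm_inv,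
        norm_inv, Complex.norm_of_nonneg hb0.le, Complex.norm_of_nonneg (by positivity)] at this
      rw [← mul_assoc, ← mul_inv, inv_mul_le_iff₀ (by positivity)] at this
      linarith
    · rw [map_smul_eq_mul, norm_inv, Complex.norm_of_nonneg (by positivity),
        inv_mul_le_iff₀ (by positivity)]
      field_simp
      exact ha.le
    · rw [map_smul_eq_mul, norm_inv, Complex.norm_of_nonneg hb0.le, inv_mul_le_iff₀ hb0]
      linarith
  have hlim : Tendsto (fun δ : ℝ => ((k : ℝ) + 1) * (schwartzSup F k f + δ) *
      (schwartzSup E k g + δ)) (𝓝[>] 0)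
      (𝓝 (((k : ℝ) + 1) * (schwartzSup F k f + 0) * (schwartzSup E k g + 0))) := by
    apply Tendsto.mono_left _ nhdsWithin_le_nhds
    exact Continuous.tendsto (by fun_prop) 0
  simp only [add_zero] at hlim
  refine ge_of_tendsto hlim ?_
  filter_upwards [self_mem_nhdsWithin] with δ hδ
  have hδ' : 0 < δ := hδ
  exact key _ _ (by linarith) (by linarith)

theorem lineDerivOp_comm (a b : E) (ρ : SchwartzMap E ℂ) :
    ∂_{a} (∂_{b} ρ) = ∂_{b} (∂_{a} ρ) := by
  have key : ∀ (u v : E) (x : E), ∂_{u} (∂_{v} ρ) x = fderiv ℝ (fderiv ℝ ρ) x u v := by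
    intro u v x
    rw [SchwartzMap.lineDerivOp_apply_eq_fderiv]
    have h1 : ⇑(∂_{v} ρ : SchwartzMap E ℂ) = fun y => fderiv ℝ ρ y v := by
      ext y; exact SchwartzMap.lineDerivOp_apply_eq_fderiv v ρ y
    have h2 : DifferentiableAt ℝ (fderiv ℝ ρ) x :=
      (SchwartzMap.fderivCLM ℝ E ℂ ρ).differentiableAt
    rw [h1, fderiv_clm_apply h2 (differentiableAt_const v)]
    simp
  ext x
  rw [key, key]
  exact ((ρ.contDiffAt 2).isSymmSndFDerivAt (by simp)).eq a b

theorem iteratedLineDerivOp_lineDerivOp_comm {n : ℕ} (w : Fin n → E) (h : E)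
    (ρ : SchwartzMap E ℂ) : ∂^{w} (∂_{h} ρ) = ∂_{h} (∂^{w} ρ) := by
  induction n with
  | zero => simp
  | succ n ih =>
    rw [iteratedLineDerivOp_succ_left, iteratedLineDerivOp_succ_left, ih, lineDerivOp_comm]

theorem iteratedFDeriv_lineDerivOp (j : ℕ) (h : E) (ρ : SchwartzMap E ℂ) (v : E) :
    iteratedFDeriv ℝ j (∂_{h} ρ : SchwartzMap E ℂ) v = fderiv ℝ (iteratedFDeriv ℝ j ρ) v h := by
  ext w
  rw [← SchwartzMap.iteratedLineDerivOp_eq_iteratedFDeriv, iteratedLineDerivOp_lineDerivOp_comm,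
    SchwartzMap.lineDerivOp_apply_eq_fderiv, ← fderiv_continuousMultilinear_apply_const_apply]
  · simp only [← SchwartzMap.iteratedLineDerivOp_eq_iteratedFDeriv]
  · exact (ρ.smooth ⊤).differentiable_iteratedFDeriv (mod_cast ENat.natCast_lt_top j) v

theorem norm_iteratedFDeriv_iteratedLineDerivOp_le {i : ℕ} (j : ℕ) (w : Fin i → E)
    (ρ : SchwartzMap E ℂ) (v : E) :
    ‖iteratedFDeriv ℝ j (∂^{w} ρ : SchwartzMap E ℂ) v‖ ≤
      (∏ a, ‖w a‖) * ‖iteratedFDeriv ℝ (j + i) ρ v‖ := by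
  induction i generalizing j with
  | zero => simp
  | succ i ih =>
    rw [iteratedLineDerivOp_succ_left, iteratedFDeriv_lineDerivOp]
    calc _ ≤ ‖fderiv ℝ (iteratedFDeriv ℝ j (∂^{Fin.tail w} ρ : SchwartzMap E ℂ)) v‖ * ‖w 0‖ :=
          ContinuousLinearMap.le_opNorm _ _
      _ = ‖iteratedFDeriv ℝ (j + 1) (∂^{Fin.tail w} ρ : SchwartzMap E ℂ) v‖ * ‖w 0‖ := by
          rw [norm_fderiv_iteratedFDeriv]
      _ ≤ ((∏ a, ‖Fin.tail w a‖) * ‖iteratedFDeriv ℝ (j + 1 + i) ρ v‖) * ‖w 0‖ := by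
          gcongr; exact ih _ _
      _ = _ := by
          rw [Fin.prod_univ_succ, show j + 1 + i = j + (i + 1) by ring]
          simp only [Fin.tail]; ring


/-- The continuous linear operator sending `ρ` to `v ↦ ρ (x - v)`. -/
noncomputable def reflTranslate (x : E) : SchwartzMap E ℂ →L[ℂ] SchwartzMap E ℂ :=
  (SchwartzMap.compSubConstCLM ℂ x).comp
    (SchwartzMap.compCLMOfContinuousLinearEquiv ℂ (ContinuousLinearEquiv.neg ℝ))

theorem reflTranslate_apply (x : E) (ρ : SchwartzMap E ℂ) (v : E) :
    reflTranslate x ρ v = ρ (x - v) := by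
  simp [reflTranslate]

theorem norm_iteratedFDeriv_reflTranslate (i : ℕ) (x : E) (ρ : SchwartzMap E ℂ) (v : E) :
    ‖iteratedFDeriv ℝ i (reflTranslate x ρ) v‖ = ‖iteratedFDeriv ℝ i ρ (x - v)‖ := by
  have h : ⇑(reflTranslate x ρ) = fun v => (ρ ∘ LinearIsometryEquiv.neg ℝ) (v - x) := by
    ext v
    simp [reflTranslate_apply]
  rw [h, iteratedFDeriv_comp_sub, LinearIsometryEquiv.norm_iteratedFDeriv_comp_right]
  simp

theorem schwartzSup_reflTranslate_le (k : ℕ) (x : E) (ρ : SchwartzMap E ℂ) :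
    schwartzSup E k (reflTranslate x ρ) ≤ (1 + ‖x‖) ^ k * (2 ^ k * schwartzSup E k ρ) := by
  have h0 := apply_nonneg (schwartzSup E k) ρ
  refine schwartzSup_le (by positivity) fun i hi v => ?_
  rw [norm_iteratedFDeriv_reflTranslate]
  have h1 : 1 + ‖v‖ ≤ (1 + ‖x‖) * (1 + ‖x - v‖) := by
    have : ‖v‖ ≤ ‖x‖ + ‖x - v‖ := by
      simpa using norm_sub_le x (x - v)
    nlinarith [norm_nonneg x, norm_nonneg (x - v)]
  calc _ ≤ ((1 + ‖x‖) * (1 + ‖x - v‖)) ^ k * ‖iteratedFDeriv ℝ i ρ (x - v)‖ := by gcongr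
    _ = (1 + ‖x‖) ^ k * ((1 + ‖x - v‖) ^ k * ‖iteratedFDeriv ℝ i ρ (x - v)‖) := by
      rw [mul_pow]; ring
    _ ≤ _ := mul_le_mul_of_nonneg_left (weight_mul_norm_iteratedFDeriv_le hi ρ _) (by positivity)

theorem norm_fderiv_iteratedFDeriv_sub (i : ℕ) (f : E → ℂ) (x y : E) :
    ‖fderiv ℝ (iteratedFDeriv ℝ i f) y - fderiv ℝ (iteratedFDeriv ℝ i f) x‖ =
      ‖iteratedFDeriv ℝ (i + 1) f y - iteratedFDeriv ℝ (i + 1) f x‖ := by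
  let e := (continuousMultilinearCurryLeftEquiv ℝ (fun _ : Fin (i + 1) => E) ℂ).symm
  have h := e.norm_map (fderiv ℝ (iteratedFDeriv ℝ i f) y - fderiv ℝ (iteratedFDeriv ℝ i f) x)
  rw [← h]
  congr 1

theorem norm_taylor_iteratedFDeriv_le {i : ℕ} {M : ℝ} (ρ : SchwartzMap E ℂ) (v h : E)
    (hM : ∀ y ∈ Metric.closedBall v ‖h‖, ‖iteratedFDeriv ℝ (i + 2) ρ y‖ ≤ M) :
    ‖iteratedFDeriv ℝ i ρ (v + h) - iteratedFDeriv ℝ i ρ v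
      - fderiv ℝ (iteratedFDeriv ℝ i ρ) v h‖ ≤ M * ‖h‖ ^ 2 := by
  have hdiff : ∀ n y, DifferentiableAt ℝ (iteratedFDeriv ℝ n ρ) y := fun n y =>
    (ρ.smooth ⊤).differentiable_iteratedFDeriv (mod_cast ENat.natCast_lt_top n) y
  have hM0 : 0 ≤ M := (norm_nonneg _).trans (hM v (Metric.mem_closedBall_self (norm_nonneg h)))
  have hv : v ∈ Metric.closedBall v ‖h‖ := Metric.mem_closedBall_self (norm_nonneg h)
  have hvh : v + h ∈ Metric.closedBall v ‖h‖ := by simp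
  have hlip : ∀ y ∈ Metric.closedBall v ‖h‖,
      ‖fderiv ℝ (iteratedFDeriv ℝ i ρ) y - fderiv ℝ (iteratedFDeriv ℝ i ρ) v‖ ≤ M * ‖h‖ := by
    intro y hy
    have h1 := (convex_closedBall v ‖h‖).norm_image_sub_le_of_norm_fderiv_le (𝕜 := ℝ)
      (f := iteratedFDeriv ℝ (i + 1) ρ) (C := M) (fun y _ => hdiff _ y)
      (fun y hy => by rw [norm_fderiv_iteratedFDeriv]; exact hM y hy) hv hy
    rw [norm_fderiv_iteratedFDeriv_sub]
    refine h1.trans ?_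
    gcongr
    simpa [dist_eq_norm] using hy
  have h2 := (convex_closedBall v ‖h‖).norm_image_sub_le_of_norm_fderiv_le' (𝕜 := ℝ)
    (f := iteratedFDeriv ℝ i ρ) (fun y _ => hdiff _ y) hlip hv hvh
  rw [add_sub_cancel_left] at h2
  exact h2.trans_eq (by ring)

theorem schwartzSup_taylor_le (k : ℕ) (ρ : SchwartzMap E ℂ) :
    ∃ M : ℝ, 0 ≤ M ∧ ∀ h : E, ‖h‖ ≤ 1 →
      schwartzSup E k (SchwartzMap.compSubConstCLM ℂ (-h) ρ - ρ - ∂_{h} ρ) ≤ M * ‖h‖ ^ 2 := by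
  have h0 := apply_nonneg (schwartzSup E (k + 2)) ρ
  refine ⟨2 ^ k * (2 ^ (k + 2) * schwartzSup E (k + 2) ρ), by positivity, fun h hh => ?_⟩
  refine schwartzSup_le (by positivity) fun i hi v => ?_
  have hc : ∀ g : SchwartzMap E ℂ, ContDiff ℝ i g := fun g => g.smooth i
  have hτ : ⇑(SchwartzMap.compSubConstCLM ℂ (-h) ρ) = fun v => ρ (v + h) := by
    ext v; simp
  have hexp : iteratedFDeriv ℝ i (SchwartzMap.compSubConstCLM ℂ (-h) ρ - ρ - ∂_{h} ρ :
      SchwartzMap E ℂ) v = iteratedFDeriv ℝ i ρ (v + h) - iteratedFDeriv ℝ i ρ v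
      - fderiv ℝ (iteratedFDeriv ℝ i ρ) v h := by
    have hcoe : ⇑(SchwartzMap.compSubConstCLM ℂ (-h) ρ - ρ - ∂_{h} ρ : SchwartzMap E ℂ) =
        ⇑(SchwartzMap.compSubConstCLM ℂ (-h) ρ) - ⇑ρ - ⇑(∂_{h} ρ : SchwartzMap E ℂ) := by
      ext v; simp
    have hcd : ContDiff ℝ i (⇑(SchwartzMap.compSubConstCLM ℂ (-h) ρ) - ⇑ρ) := (hc _).sub (hc _)
    rw [hcoe, iteratedFDeriv_sub_apply hcd.contDiffAt (hc _).contDiffAt,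
      iteratedFDeriv_sub_apply (hc _).contDiffAt (hc _).contDiffAt, iteratedFDeriv_lineDerivOp,
      hτ, iteratedFDeriv_comp_add_right]
  rw [hexp]
  have hw : 0 < (1 + ‖v‖) ^ k := by positivity
  have := norm_taylor_iteratedFDeriv_le (i := i) ρ v h
    (M := 2 ^ k * (2 ^ (k + 2) * schwartzSup E (k + 2) ρ) / (1 + ‖v‖) ^ k) ?_
  · calc _ ≤ (1 + ‖v‖) ^ k * (2 ^ k * (2 ^ (k + 2) * schwartzSup E (k + 2) ρ) / (1 + ‖v‖) ^ k
        * ‖h‖ ^ 2) := by gcongr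
      _ = _ := by field_simp
  · intro y hy
    rw [le_div_iff₀ hw]
    have hy1 : 1 + ‖v‖ ≤ 2 * (1 + ‖y‖) := by
      have h1 : ‖y - v‖ ≤ 1 := by
        rw [Metric.mem_closedBall, dist_eq_norm] at hy
        exact hy.trans hh
      have h2 : ‖v‖ ≤ ‖y‖ + ‖y - v‖ := by simpa using norm_sub_le y (y - v)
      linarith [norm_nonneg y]
    have hy2 : (1 + ‖y‖) ^ k ≤ (1 + ‖y‖) ^ (k + 2) :=
      pow_le_pow_right₀ (by linarith [norm_nonneg y]) (by omega)
    calc _ ≤ ‖iteratedFDeriv ℝ (i + 2) ρ y‖ * (2 * (1 + ‖y‖)) ^ k := by gcongr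
      _ = 2 ^ k * ((1 + ‖y‖) ^ k * ‖iteratedFDeriv ℝ (i + 2) ρ y‖) := by rw [mul_pow]; ring
      _ ≤ 2 ^ k * ((1 + ‖y‖) ^ (k + 2) * ‖iteratedFDeriv ℝ (i + 2) ρ y‖) := by gcongr
      _ ≤ _ := mul_le_mul_of_nonneg_left
        (weight_mul_norm_iteratedFDeriv_le (by omega) ρ y) (by positivity)

theorem fderiv_distribution_convolution [FiniteDimensional ℝ E] (T : SchwartzMap E ℂ →L[ℂ] ℂ)
    {k : ℕ} {C : ℝ} (hC : 0 ≤ C) (hT : ∀ g, ‖T g‖ ≤ C * schwartzSup E k g)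
    (ρ : SchwartzMap E ℂ) (x : E) :
    DifferentiableAt ℝ (fun x => T (reflTranslate x ρ)) x ∧
      ∀ h, fderiv ℝ (fun x => T (reflTranslate x ρ)) x h = T (reflTranslate x (∂_{h} ρ)) := by
  let D : E →ₗ[ℝ] ℂ :=
    { toFun := fun h => T (reflTranslate x (∂_{h} ρ))
      map_add' := fun a b => by rw [lineDerivOp_left_add, map_add, map_add]
      map_smul' := fun r a => by
        rw [lineDerivOp_left_smul, ← Complex.coe_smul r (∂_{a} ρ), map_smul, map_smul]
        simp }
  obtain ⟨M, hM0, hM⟩ := schwartzSup_taylor_le k ρ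
  have hD : HasFDerivAt (fun x => T (reflTranslate x ρ)) (LinearMap.toContinuousLinearMap D) x := by
    rw [hasFDerivAt_iff_isLittleO_nhds_zero]
    have hO : (fun h => T (reflTranslate (x + h) ρ) - T (reflTranslate x ρ)
        - LinearMap.toContinuousLinearMap D h) =O[𝓝 0] fun h : E => ‖h‖ ^ 2 := by
      refine Asymptotics.IsBigO.of_bound (C * ((1 + ‖x‖) ^ k * (2 ^ k * M))) ?_
      filter_upwards [Metric.closedBall_mem_nhds (0 : E) one_pos] with h hh
      rw [mem_closedBall_zero_iff] at hh
      have heq : T (reflTranslate (x + h) ρ) - T (reflTranslate x ρ)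
          - LinearMap.toContinuousLinearMap D h
          = T (reflTranslate x (SchwartzMap.compSubConstCLM ℂ (-h) ρ - ρ - ∂_{h} ρ)) := by
        have h1 : reflTranslate (x + h) ρ =
            reflTranslate x (SchwartzMap.compSubConstCLM ℂ (-h) ρ) := by
          ext v
          simp only [reflTranslate_apply, SchwartzMap.compSubConstCLM_apply]
          congr 1; abel
        rw [map_sub, map_sub, map_sub, map_sub, h1]
        rfl
      rw [heq]
      calc _ ≤ C * schwartzSup E k _ := hT _
        _ ≤ C * ((1 + ‖x‖) ^ k * (2 ^ k * (M * ‖h‖ ^ 2))) := by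
          gcongr
          refine (schwartzSup_reflTranslate_le _ _ _).trans ?_
          gcongr
          exact hM h hh
        _ = _ := by rw [Real.norm_of_nonneg (by positivity)]; ring
    refine hO.trans_isLittleO ?_
    exact Asymptotics.isLittleO_norm_pow_id one_lt_two
  exact ⟨hD.differentiableAt, fun h => by rw [hD.fderiv]; rfl⟩

theorem contDiff_distribution_convolution [FiniteDimensional ℝ E]
    (T : SchwartzMap E ℂ →L[ℂ] ℂ) {k : ℕ} {C : ℝ} (hC : 0 ≤ C)
    (hT : ∀ g, ‖T g‖ ≤ C * schwartzSup E k g) (ρ : SchwartzMap E ℂ) :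
    ContDiff ℝ (⊤ : ℕ∞) (fun x => T (reflTranslate x ρ)) := by
  rw [contDiff_infty]
  intro n
  induction n generalizing ρ with
  | zero =>
    exact contDiff_zero.2 (continuous_iff_continuousAt.2 fun x =>
      (fderiv_distribution_convolution T hC hT ρ x).1.continuousAt)
  | succ n ih =>
    push_cast
    rw [contDiff_succ_iff_fderiv]
    refine ⟨fun x => (fderiv_distribution_convolution T hC hT ρ x).1, by simp, ?_⟩
    rw [contDiff_clm_apply_iff]
    intro h
    simp only [(fderiv_distribution_convolution T hC hT ρ _).2]
    exact ih _

theorem iteratedFDeriv_distribution_convolution [FiniteDimensional ℝ E]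
    (T : SchwartzMap E ℂ →L[ℂ] ℂ) {k : ℕ} {C : ℝ} (hC : 0 ≤ C)
    (hT : ∀ g, ‖T g‖ ≤ C * schwartzSup E k g) (ρ : SchwartzMap E ℂ) {i : ℕ} (w : Fin i → E)
    (x : E) :
    iteratedFDeriv ℝ i (fun x => T (reflTranslate x ρ)) x w = T (reflTranslate x (∂^{w} ρ)) := by
  induction i generalizing x with
  | zero => simp
  | succ i ih =>
    rw [iteratedLineDerivOp_succ_left, iteratedFDeriv_succ_apply_left,
      ← fderiv_continuousMultilinear_apply_const_apply]
    · simp only [ih, (fderiv_distribution_convolution T hC hT _ _).2]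
    · exact (contDiff_distribution_convolution T hC hT ρ).differentiable_iteratedFDeriv
        (mod_cast ENat.natCast_lt_top i) x

/-- The derivatives of `x ↦ T (y ↦ ρ (x - y))` grow at most like the order of `T`. -/
theorem norm_iteratedFDeriv_distribution_convolution_le [FiniteDimensional ℝ E]
    (T : SchwartzMap E ℂ →L[ℂ] ℂ) {k : ℕ} {C : ℝ} (hC : 0 ≤ C)
    (hT : ∀ g, ‖T g‖ ≤ C * schwartzSup E k g) (ρ : SchwartzMap E ℂ) {i : ℕ} {M : ℝ} (hM : 0 ≤ M)
    (hρ : ∀ j ≤ k, ∀ v, (1 + ‖v‖) ^ k * ‖iteratedFDeriv ℝ (j + i) ρ v‖ ≤ M) (x : E) :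
    ‖iteratedFDeriv ℝ i (fun x => T (reflTranslate x ρ)) x‖
      ≤ C * ((1 + ‖x‖) ^ k * (2 ^ k * M)) := by
  refine ContinuousMultilinearMap.opNorm_le_bound (by positivity) fun w => ?_
  rw [iteratedFDeriv_distribution_convolution T hC hT]
  have hw : 0 ≤ ∏ a, ‖w a‖ := Finset.prod_nonneg fun _ _ => norm_nonneg _
  calc _ ≤ C * schwartzSup E k (reflTranslate x (∂^{w} ρ)) := hT _
    _ ≤ C * ((1 + ‖x‖) ^ k * (2 ^ k * schwartzSup E k (∂^{w} ρ))) := by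
      gcongr
      exact schwartzSup_reflTranslate_le _ _ _
    _ ≤ C * ((1 + ‖x‖) ^ k * (2 ^ k * ((∏ a, ‖w a‖) * M))) := by
      gcongr
      refine schwartzSup_le (by positivity) fun j hj v => ?_
      calc _ ≤ (1 + ‖v‖) ^ k * ((∏ a, ‖w a‖) * ‖iteratedFDeriv ℝ (j + i) ρ v‖) := by
            gcongr
            exact norm_iteratedFDeriv_iteratedLineDerivOp_le j w ρ v
        _ = (∏ a, ‖w a‖) * ((1 + ‖v‖) ^ k * ‖iteratedFDeriv ℝ (j + i) ρ v‖) := by ring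
        _ ≤ _ := by gcongr; exact hρ j hj v
    _ = _ := by ring

theorem norm_iteratedFDeriv_scaled {d : ℕ} (φ : SchwartzMap (Fin d → ℝ) ℂ) {t : ℝ} (ht : 0 < t)
    (i : ℕ) (v : Fin d → ℝ) :
    ‖iteratedFDeriv ℝ i (scaled ⇑φ t) v‖ =
      (t⁻¹) ^ (d + i) * ‖iteratedFDeriv ℝ i φ (t⁻¹ • v)‖ := by
  have h : scaled ⇑φ t = fun v => ((t⁻¹) ^ d : ℝ) • φ (t⁻¹ • v) := by
    ext v
    simp [scaled]
  have hc : ContDiff ℝ i fun v => φ (t⁻¹ • v) := (φ.smooth i).comp (contDiff_const_smul _)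
  rw [h, iteratedFDeriv_const_smul_apply' hc.contDiffAt,
    iteratedFDeriv_comp_const_smul _ (φ.smooth i), norm_smul, norm_smul,
    Real.norm_of_nonneg (by positivity), Real.norm_of_nonneg (by positivity), pow_add, mul_assoc]

theorem weight_mul_norm_iteratedFDeriv_scaled_le {d : ℕ} (φ : SchwartzMap (Fin d → ℝ) ℂ) {t : ℝ}
    (ht : t ∈ Set.Ioc (0 : ℝ) 1) {i j k l : ℕ} (hi : i ≤ l) (hj : j ≤ k) (v : Fin d → ℝ) :
    (1 + ‖v‖) ^ k * ‖iteratedFDeriv ℝ (j + i) (scaled ⇑φ t) v‖ ≤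
      (t⁻¹) ^ (d + k + l) * (2 ^ (k + l) * schwartzSup (Fin d → ℝ) (k + l) φ) := by
  have ht1 : 1 ≤ t⁻¹ := (one_le_inv₀ ht.1).2 ht.2
  have hv : ‖v‖ ≤ ‖t⁻¹ • v‖ := by
    rw [norm_smul, Real.norm_of_nonneg (by positivity)]
    exact le_mul_of_one_le_left (norm_nonneg v) ht1
  rw [norm_iteratedFDeriv_scaled φ ht.1]
  calc _ = (t⁻¹) ^ (d + (j + i)) *
        ((1 + ‖v‖) ^ k * ‖iteratedFDeriv ℝ (j + i) φ (t⁻¹ • v)‖) := by ring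
    _ ≤ (t⁻¹) ^ (d + k + l) *
        ((1 + ‖t⁻¹ • v‖) ^ (k + l) * ‖iteratedFDeriv ℝ (j + i) φ (t⁻¹ • v)‖) := by
      gcongr ?_ * (?_ * _)
      · exact pow_le_pow_right₀ ht1 (by omega)
      · exact (pow_le_pow_left₀ (by positivity) (by linarith) k).trans
          (pow_le_pow_right₀ (by linarith [norm_nonneg (t⁻¹ • v)]) (by omega))
    _ ≤ _ := mul_le_mul_of_nonneg_left
      (weight_mul_norm_iteratedFDeriv_le (by omega) φ _) (by have := ht.1; positivity)

theorem mu_schwartz_lt_top (k : ℕ) (f : SchwartzMap E ℂ) : mu (k : ℤ) k ⇑f < ⊤ := by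
  refine lt_of_le_of_lt (iSup_le fun x => iSup_le fun i => iSup_le fun hi => ?_)
    (ENNReal.ofReal_lt_top (r := 2 ^ k * schwartzSup E k f))
  rw [zpow_natCast]
  exact ENNReal.ofReal_le_ofReal (weight_mul_norm_iteratedFDeriv_le hi f x)

theorem ofReal_schwartzSup_le_mu (k : ℕ) (f : SchwartzMap E ℂ) :
    ENNReal.ofReal (schwartzSup E k f) ≤ mu (k : ℤ) k ⇑f := by
  rw [← ENNReal.ofReal_toReal (mu_schwartz_lt_top k f).ne]
  refine ENNReal.ofReal_le_ofReal (schwartzSup_le ENNReal.toReal_nonneg fun i hi x => ?_)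
  rw [← ENNReal.ofReal_le_iff_le_toReal (mu_schwartz_lt_top k f).ne, ← zpow_natCast]
  exact le_iSup_of_le x (le_iSup_of_le i (le_iSup_of_le hi le_rfl))

/-- The moderation estimate for the regularizations at scale `t` of a continuous linear map into
tempered distributions. -/
theorem exists_mu_regularization_le {m n : ℕ}
    (Λ : SchwartzMap (Fin n → ℝ) ℂ →L[ℂ] (SchwartzMap (Fin m → ℝ) ℂ →L[ℂ] ℂ))
    (φ : SchwartzMap (Fin m → ℝ) ℂ) (Φ : ℝ → (Fin m → ℝ) → SchwartzMap (Fin m → ℝ) ℂ)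
    (hΦ : ∀ t ∈ Set.Ioc (0:ℝ) 1, ∀ x v, Φ t x v = scaled ⇑φ t (x - v)) :
    ∃ k : ℕ, ∀ l : ℕ, ∃ C ≥ (0 : ℝ), ∀ t ∈ Set.Ioc (0 : ℝ) 1, ∀ f,
      ContDiff ℝ (⊤ : ℕ∞) (fun x => Λ f (Φ t x)) ∧
      mu (-(k : ℤ)) l (fun x => Λ f (Φ t x)) ≤
        ENNReal.ofReal (C * (t⁻¹) ^ (m + k + l)) * mu (k : ℤ) k ⇑f := by
  obtain ⟨k, C, hC, hΛ⟩ := exists_bound_of_continuous_bilinear Λ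
  refine ⟨k, fun l => ⟨C * (2 ^ k * (2 ^ (k + l) * schwartzSup (Fin m → ℝ) (k + l) φ)),
    by positivity, fun t ht f => ?_⟩⟩
  have ht0 := ht.1
  set ρ := reflTranslate 0 (Φ t 0) with hρ
  have hρv : ⇑ρ = scaled ⇑φ t := by
    ext v
    simp [hρ, reflTranslate_apply, hΦ t ht]
  have hΦρ : (fun x => Λ f (Φ t x)) = fun x => Λ f (reflTranslate x ρ) := by
    ext x
    congr 1
    ext v
    rw [reflTranslate_apply, hΦ t ht, hρv]
  have hCf : 0 ≤ C * schwartzSup (Fin n → ℝ) k f := mul_nonneg hC (apply_nonneg _ _)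
  rw [hΦρ]
  refine ⟨contDiff_distribution_convolution (Λ f) hCf (hΛ f) ρ, ?_⟩
  refine le_trans ?_ (mul_le_mul_right (ofReal_schwartzSup_le_mu k f) _)
  rw [← ENNReal.ofReal_mul (by positivity)]
  refine iSup_le fun x => iSup_le fun i => iSup_le fun hi => ENNReal.ofReal_le_ofReal ?_
  have hbd := norm_iteratedFDeriv_distribution_convolution_le (Λ f) hCf (hΛ f) ρ (i := i)
    (M := (t⁻¹) ^ (m + k + l) * (2 ^ (k + l) * schwartzSup (Fin m → ℝ) (k + l) φ))
    (by positivity)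
    (fun j hj v => by
      rw [hρv]
      exact weight_mul_norm_iteratedFDeriv_scaled_le φ ht hi hj v) x
  have hx : (1 + ‖x‖) ^ k ≠ 0 := by positivity
  calc _ ≤ (1 + ‖x‖) ^ (-(k : ℤ)) * _ := mul_le_mul_of_nonneg_left hbd (by positivity)
    _ = _ := by
      rw [zpow_neg, zpow_natCast]
      field_simp

end SchwartzEstimates

/-- the regularization net `L_ε(f) = Λ(f) ∗ φ_{ε^s}` of a continuous
linear map `Λ : 𝓢(ℝ^n) → 𝓢'(ℝ^m)` is continuous into `O_M`, satisfies the explicit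
moderation estimate, and is `L_{0,c}`-strongly moderate for every `c ∈ (s,1]`. -/
theorem stmt17 (m n : ℕ) (hm : 1 ≤ m) (hn : 1 ≤ n)
    (Λ : SchwartzMap (Fin n → ℝ) ℂ →L[ℂ] (SchwartzMap (Fin m → ℝ) ℂ →L[ℂ] ℂ))
    (s : ℝ) (hs : s ∈ Set.Ioo (0:ℝ) 1)
    (φ : SchwartzMap (Fin m → ℝ) ℂ)
    (Φ : ℝ → (Fin m → ℝ) → SchwartzMap (Fin m → ℝ) ℂ)
    (hΦ : ∀ t ∈ Set.Ioc (0:ℝ) 1, ∀ x v, Φ t x v = scaled ⇑φ t (x - v))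
    (L : ℝ → SchwartzMap (Fin n → ℝ) ℂ → ((Fin m → ℝ) → ℂ))
    (hLdef : ∀ ε ∈ Set.Ioc (0:ℝ) 1, ∀ f x, L ε f x = Λ f (Φ (ε ^ s) x)) :
    (∀ ε ∈ Set.Ioc (0:ℝ) 1, ∀ f, TemperateGrowth' (L ε f)) ∧
    (∀ ε ∈ Set.Ioc (0:ℝ) 1, ContinuousIntoOM m n (L ε)) ∧
    (∃ p q l₁ l₂ : ℕ, ∀ l : ℕ, ∃ C ≥ (0:ℝ), ∃ η > (0:ℝ), ∀ ε : ℝ, 0 < ε → ε ≤ η →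
      ∀ f : SchwartzMap (Fin n → ℝ) ℂ,
        mu (-(p:ℤ)) l (L ε f)
          ≤ ENNReal.ofReal (C * ε ^ (-(s * ((m:ℝ) + l₂ + l)))) * mu (q:ℤ) l₁ ⇑f) ∧
    (∀ c : ℝ, s < c → c ≤ 1 → ∃ lam : ℕ → ℕ, ∃ r : ℕ → ℝ,
      Filter.Tendsto (fun l : ℕ => (lam l : ℝ) / (l:ℝ)) Filter.atTop (nhds 0) ∧
      MemLa c r ∧ StronglyModerateWith m n L lam r) := by
  obtain ⟨k, hk⟩ := exists_mu_regularization_le Λ φ Φ hΦ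
  have hL : ∀ ε ∈ Set.Ioc (0 : ℝ) 1, ∀ f, L ε f = fun x => Λ f (Φ (ε ^ s) x) :=
    fun ε hε f => funext (hLdef ε hε f)
  have ht : ∀ ε ∈ Set.Ioc (0 : ℝ) 1, ε ^ s ∈ Set.Ioc (0 : ℝ) 1 := fun ε hε =>
    ⟨Real.rpow_pos_of_pos hε.1 s, Real.rpow_le_one hε.1.le hε.2 hs.1.le⟩
  have hpow : ∀ ε ∈ Set.Ioc (0 : ℝ) 1, ∀ l : ℕ,
      ((ε ^ s)⁻¹) ^ (m + k + l) = ε ^ (-(s * ((m : ℝ) + k + l))) := fun ε hε l => by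
    rw [← Real.rpow_neg hε.1.le, ← Real.rpow_natCast, ← Real.rpow_mul hε.1.le]
    push_cast
    ring_nf
  have hest : ∀ l : ℕ, ∃ C ≥ (0 : ℝ), ∀ ε ∈ Set.Ioc (0 : ℝ) 1, ∀ f,
      mu (-(k : ℤ)) l (L ε f) ≤
        ENNReal.ofReal (C * ε ^ (-(s * ((m : ℝ) + k + l)))) * mu (k : ℤ) k ⇑f := fun l => by
    obtain ⟨C, hC, h⟩ := hk l
    refine ⟨C, hC, fun ε hε f => ?_⟩
    rw [hL ε hε f, ← hpow ε hε l]
    exact (h _ (ht ε hε) f).2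
  have htemp : ∀ ε ∈ Set.Ioc (0 : ℝ) 1, ∀ f, TemperateGrowth' (L ε f) := fun ε hε f => by
    refine ⟨?_, fun l => ⟨k, ?_⟩⟩
    · obtain ⟨C, -, h⟩ := hk 0
      rw [hL ε hε f]
      exact (h _ (ht ε hε) f).1
    · obtain ⟨C, -, h⟩ := hest l
      exact (h ε hε f).trans_lt (ENNReal.mul_lt_top ENNReal.ofReal_lt_top (mu_schwartz_lt_top k f))
  refine ⟨htemp, fun ε hε l => ?_, ⟨k, k, k, k, fun l => ?_⟩, fun c hsc hc => ?_⟩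
  · obtain ⟨C, hC, h⟩ := hest l
    exact ⟨_, mul_nonneg hC (Real.rpow_nonneg hε.1.le _), k, k, k, h ε hε⟩
  · obtain ⟨C, hC, h⟩ := hest l
    exact ⟨C, hC, 1, one_pos, fun ε h0 h1 => h ε ⟨h0, h1⟩⟩
  · have hr : ∀ l : ℕ, 0 ≤ s * ((m : ℝ) + k + l) := fun l => mul_nonneg hs.1.le (by positivity)
    have hlim : Tendsto (fun l : ℕ => s * ((m : ℝ) + k + l) / (l : ℝ)) atTop (nhds s) := by
      have h1 : Tendsto (fun l : ℕ => s * ((m : ℝ) + k) / (l : ℝ) + s) atTop (nhds (0 + s)) :=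
        (tendsto_const_div_atTop_nhds_zero_nat _).add_const s
      rw [zero_add] at h1
      refine h1.congr' ?_
      filter_upwards [eventually_ne_atTop 0] with l hl
      have : (l : ℝ) ≠ 0 := mod_cast hl
      field_simp
    refine ⟨fun _ => k, fun l => s * ((m : ℝ) + k + l), tendsto_const_div_atTop_nhds_zero_nat _,
      ⟨hr, Or.inr ⟨hs.1.trans hsc, hlim.limsup_eq.trans_lt hsc⟩⟩, htemp, hr, fun l => ?_⟩
    obtain ⟨C, hC, h⟩ := hest l
    exact ⟨C, hC, k, k, 1, one_pos, fun ε h0 h1 => h ε ⟨h0, h1⟩⟩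
end

section
/- Let u be a tempered distribution on ℝ^m, let s ∈ (0,1), and let φ be a mollifier on ℝ^m. For ε ∈ (0,1] define the smooth function (u ∗ φ_{ε^s})(x) = u(y ↦ φ_{ε^s}(x−y)). Then for every g ∈ 𝓢(ℝ^m) and every p ∈ ℕ: ∫_{ℝ^m} (u ∗ φ_{ε^s})(x) g(x) dx − u(g) = O(ε^p) as ε → 0. That is, the net (u ∗ φ_{ε^s})_{ε∈(0,1]} is equal to u in the generalized distribution sense. -/
open MeasureTheory Filter

open scoped SchwartzMap LineDeriv

section Translation

variable {E : Type*} [NormedAddCommGroup E] [NormedSpace ℝ E]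

theorem SchwartzMap.lineDerivOp_comm (v w : E) (f : 𝓢(E, ℂ)) :
    ∂_{v} (∂_{w} f) = ∂_{w} (∂_{v} f) := by
  have key (a b x : E) : ∂_{a} (∂_{b} f) x = fderiv ℝ (fderiv ℝ f) x a b := by
    have hd : DifferentiableAt ℝ (fderiv ℝ f) x :=
      ((f.smooth 2).fderiv_right (m := 1) (by norm_num)).differentiable (by norm_num) x
    rw [SchwartzMap.lineDerivOp_apply_eq_fderiv]
    change fderiv ℝ (fun y => fderiv ℝ f y b) x a = _
    rw [fderiv_clm_apply hd (differentiableAt_const b)]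
    simp
  ext x
  rw [key, key]
  exact ((f.smooth 2).contDiffAt.isSymmSndFDerivAt (by simp)) v w

theorem SchwartzMap.lineDerivOp_iteratedLineDerivOp_comm {n : ℕ} (v : E) (w : Fin n → E)
    (f : 𝓢(E, ℂ)) : ∂_{v} (∂^{w} f) = ∂^{w} (∂_{v} f) := by
  induction n with
  | zero => rfl
  | succ n ih =>
    rw [LineDeriv.iteratedLineDerivOp_succ_left, LineDeriv.iteratedLineDerivOp_succ_left,
      SchwartzMap.lineDerivOp_comm, ih]

theorem SchwartzMap.fderiv_iteratedFDeriv_apply (f : 𝓢(E, ℂ)) (n : ℕ) (x v : E) :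
    fderiv ℝ (iteratedFDeriv ℝ n f) x v = iteratedFDeriv ℝ n (∂_{v} f : 𝓢(E, ℂ)) x := by
  ext w
  have h : fderiv ℝ (iteratedFDeriv ℝ n f) x v w
      = iteratedFDeriv ℝ (n + 1) f x (Fin.cons v w) := by
    rw [iteratedFDeriv_succ_apply_left]; simp
  rw [h, ← SchwartzMap.iteratedLineDerivOp_eq_iteratedFDeriv,
    ← SchwartzMap.iteratedLineDerivOp_eq_iteratedFDeriv,
    LineDeriv.iteratedLineDerivOp_succ_left]
  simp [SchwartzMap.lineDerivOp_iteratedLineDerivOp_comm]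

theorem SchwartzMap.hasDerivAt_iteratedFDeriv_sub_smul (f : 𝓢(E, ℂ)) (n : ℕ) (y v : E) (r : ℝ) :
    HasDerivAt (fun r : ℝ => iteratedFDeriv ℝ n f (y - r • v))
      (-iteratedFDeriv ℝ n (∂_{v} f : 𝓢(E, ℂ)) (y - r • v)) r := by
  have hd : DifferentiableAt ℝ (iteratedFDeriv ℝ n f) (y - r • v) :=
    (f.smooth (n + 1)).differentiable_iteratedFDeriv (by exact_mod_cast Nat.lt_succ_self n) _
  have hl : HasDerivAt (fun r : ℝ => y - r • v) (-v) r := by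
    simpa using ((hasDerivAt_id r).smul_const v).const_sub y
  have := hd.hasFDerivAt.comp_hasDerivAt r hl
  rwa [map_neg, f.fderiv_iteratedFDeriv_apply] at this

theorem SchwartzMap.iteratedFDeriv_compSubConstCLM (f : 𝓢(E, ℂ)) (n : ℕ) (a y : E) :
    iteratedFDeriv ℝ n (f.compSubConstCLM ℂ a) y = iteratedFDeriv ℝ n f (y - a) :=
  iteratedFDeriv_comp_sub n a y

theorem SchwartzMap.iteratedFDeriv_compSubConstCLM_sub (f : 𝓢(E, ℂ)) (n : ℕ) (a y : E) :
    iteratedFDeriv ℝ n (f.compSubConstCLM ℂ a - f : 𝓢(E, ℂ)) y =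
      iteratedFDeriv ℝ n f (y - a) - iteratedFDeriv ℝ n f y := by
  have e : ((f.compSubConstCLM ℂ a - f : 𝓢(E, ℂ)) : E → ℂ) =
      (f.compSubConstCLM ℂ a : E → ℂ) - f := by
    ext x; simp
  rw [e, iteratedFDeriv_sub_apply ((f.compSubConstCLM ℂ a).contDiffAt n) (f.contDiffAt n),
    SchwartzMap.iteratedFDeriv_compSubConstCLM]

theorem SchwartzMap.lineDerivOp_compSubConstCLM (f : 𝓢(E, ℂ)) (a v : E) :
    ∂_{v} (f.compSubConstCLM ℂ a) = (∂_{v} f).compSubConstCLM ℂ a := by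
  ext y
  simp only [SchwartzMap.lineDerivOp_apply_eq_fderiv, SchwartzMap.compSubConstCLM_apply]
  exact congrArg (fun L : E →L[ℝ] ℂ => L v) (fderiv_comp_sub (𝕜 := ℝ) (f := f) (x := y) a)

/-- Polynomial growth in the translation parameter of the pointwise Schwartz weights. -/
theorem SchwartzMap.exists_pow_mul_iteratedFDeriv_sub_le (f : 𝓢(E, ℂ)) (k n : ℕ) :
    ∃ C, 0 ≤ C ∧ ∀ a y : E, ‖y‖ ^ k * ‖iteratedFDeriv ℝ n f (y - a)‖ ≤ C * (1 + ‖a‖) ^ k := by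
  refine ⟨2 ^ k * (Finset.Iic (k, n)).sup (fun m => SchwartzMap.seminorm ℝ m.1 m.2) f,
    by positivity, fun a y => ?_⟩
  have h := SchwartzMap.one_add_le_sup_seminorm_apply (𝕜 := ℝ) (m := (k, n)) le_rfl le_rfl f (y - a)
  have hy : ‖y‖ ≤ (1 + ‖y - a‖) * (1 + ‖a‖) := by
    have := norm_add_le (y - a) a
    rw [sub_add_cancel] at this
    nlinarith [norm_nonneg (y - a), norm_nonneg a]
  calc ‖y‖ ^ k * ‖iteratedFDeriv ℝ n f (y - a)‖
      ≤ ((1 + ‖y - a‖) * (1 + ‖a‖)) ^ k * ‖iteratedFDeriv ℝ n f (y - a)‖ := by gcongr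
    _ = ((1 + ‖y - a‖) ^ k * ‖iteratedFDeriv ℝ n f (y - a)‖) * (1 + ‖a‖) ^ k := by
      rw [mul_pow]; ring
    _ ≤ _ := by gcongr

/-- A continuous linear map on Schwartz space is bounded by a finite sum of seminorms. -/
theorem SchwartzMap.exists_norm_le_sum_seminorm {X : Type*} [NormedAddCommGroup X]
    [NormedSpace ℂ X] (v : 𝓢(E, ℂ) →L[ℂ] X) :
    ∃ (s : Finset (ℕ × ℕ)) (C : ℝ), 0 ≤ C ∧
      ∀ f, ‖v f‖ ≤ C * ∑ i ∈ s, SchwartzMap.seminorm ℂ i.1 i.2 f := by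
  obtain ⟨s, C, -, h⟩ := Seminorm.bound_of_continuous (schwartz_withSeminorms ℂ E ℂ)
    ((normSeminorm ℂ X).comp v.toLinearMap) (continuous_norm.comp v.continuous)
  refine ⟨s, C, C.2, fun f => (h f).trans ?_⟩
  change (C : ℝ) * s.sup (schwartzSeminormFamily ℂ E ℂ) f ≤ _
  gcongr
  have := Seminorm.le_def.1 (Seminorm.finset_sup_le_sum (schwartzSeminormFamily ℂ E ℂ) s) f
  refine this.trans (le_of_eq ?_)
  rw [← FunLike.coeAddMonoidHom_apply]
  simp only [map_sum, Finset.sum_apply, FunLike.coeAddMonoidHom_apply]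
  rfl

theorem SchwartzMap.exists_norm_compSubConstCLM_le {X : Type*} [NormedAddCommGroup X]
    [NormedSpace ℂ X] (v : 𝓢(E, ℂ) →L[ℂ] X) (f : 𝓢(E, ℂ)) :
    ∃ (C : ℝ) (K : ℕ), 0 ≤ C ∧ ∀ a : E, ‖v (f.compSubConstCLM ℂ a)‖ ≤ C * (1 + ‖a‖) ^ K := by
  obtain ⟨s, C, hC, h⟩ := SchwartzMap.exists_norm_le_sum_seminorm v
  choose B hB hBf using f.exists_pow_mul_iteratedFDeriv_sub_le
  refine ⟨C * ∑ i ∈ s, B i.1 i.2, ∑ i ∈ s, i.1,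
    mul_nonneg hC (Finset.sum_nonneg fun i _ => hB _ _), fun a => (h _).trans ?_⟩
  rw [mul_assoc, Finset.sum_mul]
  refine mul_le_mul_of_nonneg_left (Finset.sum_le_sum fun i hi => ?_) hC
  have hb := hB i.1 i.2
  refine SchwartzMap.seminorm_le_bound ℂ _ _ _ (by positivity) fun y => ?_
  rw [SchwartzMap.iteratedFDeriv_compSubConstCLM]
  refine (hBf i.1 i.2 a y).trans ?_
  gcongr
  · linarith [norm_nonneg a]
  · exact Finset.single_le_sum (f := fun i : ℕ × ℕ => i.1) (fun _ _ => Nat.zero_le _) hi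


theorem mul_norm_first_order_remainder_le {X : Type*} [NormedAddCommGroup X] [NormedSpace ℝ X]
    {W V A : ℝ → X} (hW : ∀ r, HasDerivAt W (-V r) r) (hV : ∀ r, HasDerivAt V (-A r) r)
    {c M : ℝ} (hc : 0 ≤ c) (hA : ∀ r, |r| ≤ 1 → c * ‖A r‖ ≤ M) {r : ℝ} (hr : |r| ≤ 1) :
    c * ‖W r - W 0 + r • V 0‖ ≤ M * r ^ 2 := by
  have hnorm (x : X) : c * ‖x‖ = ‖c • x‖ := by rw [norm_smul, Real.norm_of_nonneg hc]
  have hM : 0 ≤ M := (mul_nonneg hc (norm_nonneg _)).trans (hA 0 (by simp))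
  have mem0 (ρ : ℝ) : (0 : ℝ) ∈ Set.Icc (-|ρ|) |ρ| := by simp
  have mem1 (ρ : ℝ) : ρ ∈ Set.Icc (-|ρ|) |ρ| := abs_le.1 le_rfl
  have hV' (ρ : ℝ) (hρ : |ρ| ≤ 1) : c * ‖V ρ - V 0‖ ≤ M * |ρ| := by
    have := (convex_Icc (-|ρ|) |ρ|).norm_image_sub_le_of_norm_hasDerivWithin_le
      (f := fun r => c • V r) (C := M)
      (fun x _ => ((hV x).const_smul c).hasDerivWithinAt)
      (fun x hx => by
        rw [smul_neg, norm_neg, ← hnorm]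
        exact hA x ((abs_le.2 hx).trans hρ)) (mem0 ρ) (mem1 ρ)
    rwa [← smul_sub, ← hnorm, sub_zero, Real.norm_eq_abs] at this
  have := (convex_Icc (-|r|) |r|).norm_image_sub_le_of_norm_hasDerivWithin_le
      (f := fun r => c • (W r + r • V 0)) (C := M * |r|)
      (fun x _ => (((hW x).add ((hasDerivAt_id x).smul_const (V 0))).const_smul c).hasDerivWithinAt)
      (fun x hx => by
        rw [one_smul, neg_add_eq_sub, ← hnorm, norm_sub_rev]
        have hx' := abs_le.2 hx
        exact (hV' x (hx'.trans hr)).trans (by gcongr)) (mem0 r) (mem1 r)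
  rw [← smul_sub, ← hnorm, sub_zero, Real.norm_eq_abs, mul_assoc, ← sq, sq_abs] at this
  convert this using 3
  simp only [zero_smul, add_zero]
  abel

theorem SchwartzMap.exists_norm_compSubConstCLM_smul_remainder_le (v : 𝓢(E, ℂ) →L[ℂ] ℂ)
    (f : 𝓢(E, ℂ)) (z : E) :
    ∃ C, ∀ r : ℝ, |r| ≤ 1 →
      ‖v (f.compSubConstCLM ℂ (r • z) - f + (r : ℂ) • ∂_{z} f)‖ ≤ C * r ^ 2 := by
  obtain ⟨s, C, hC, h⟩ := SchwartzMap.exists_norm_le_sum_seminorm v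
  choose B hB hBf using (∂_{z} (∂_{z} f) : 𝓢(E, ℂ)).exists_pow_mul_iteratedFDeriv_sub_le
  refine ⟨C * ∑ i ∈ s, B i.1 i.2 * (1 + ‖z‖) ^ i.1, fun r hr => (h _).trans ?_⟩
  rw [mul_assoc, Finset.sum_mul]
  refine mul_le_mul_of_nonneg_left (Finset.sum_le_sum fun i hi => ?_) hC
  obtain ⟨k, n⟩ := i
  have hb := hB k n
  refine SchwartzMap.seminorm_le_bound ℂ _ _ _ (by positivity) fun y => ?_
  have key := mul_norm_first_order_remainder_le (c := ‖y‖ ^ k) (M := B k n * (1 + ‖z‖) ^ k)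
    (f.hasDerivAt_iteratedFDeriv_sub_smul n y z)
    ((∂_{z} f).hasDerivAt_iteratedFDeriv_sub_smul n y z) (by positivity) (fun ρ hρ => by
      refine (hBf k n (ρ • z) y).trans ?_
      rw [norm_smul, Real.norm_eq_abs]
      gcongr
      exact mul_le_of_le_one_left (norm_nonneg _) hρ) hr
  have e : ((f.compSubConstCLM ℂ (r • z) - f + (r : ℂ) • ∂_{z} f : 𝓢(E, ℂ)) : E → ℂ) =
      ((f.compSubConstCLM ℂ (r • z) - f : 𝓢(E, ℂ)) : E → ℂ) + r • (∂_{z} f : 𝓢(E, ℂ)) := by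
    ext x; simp
  rw [e, iteratedFDeriv_add_apply (SchwartzMap.contDiffAt _ n)
      (((∂_{z} f).contDiffAt n).const_smul r), SchwartzMap.iteratedFDeriv_compSubConstCLM_sub,
    iteratedFDeriv_const_smul_apply ((∂_{z} f).contDiffAt n)]
  simpa only [zero_smul, sub_zero] using key

theorem SchwartzMap.hasDerivAt_apply_compSubConstCLM_smul (v : 𝓢(E, ℂ) →L[ℂ] ℂ)
    (f : 𝓢(E, ℂ)) (z : E) (r : ℝ) :
    HasDerivAt (fun r : ℝ => v (f.compSubConstCLM ℂ (r • z)))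
      (-v ((∂_{z} f).compSubConstCLM ℂ (r • z))) r := by
  obtain ⟨C, h⟩ := SchwartzMap.exists_norm_compSubConstCLM_smul_remainder_le
    (v ∘L SchwartzMap.compSubConstCLM ℂ (r • z)) f z
  rw [hasDerivAt_iff_isLittleO]
  refine Asymptotics.IsBigO.trans_isLittleO (g := fun x => (x - r) ^ 2) ?_ ?_
  · refine Asymptotics.IsBigO.of_bound C ?_
    filter_upwards [Metric.closedBall_mem_nhds r one_pos] with x hx
    have := h (x - r) (by simpa [Real.dist_eq] using hx)
    rw [Real.norm_of_nonneg (sq_nonneg _)]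
    simpa [SchwartzMap.compSubConstCLM_comp, ← add_smul] using this
  · have : Tendsto (fun x => x - r) (nhds r) (nhds 0) := by
      simpa using (continuous_sub_right r).tendsto r
    simpa [Function.comp_def] using
      (Asymptotics.isLittleO_pow_id (𝕜 := ℝ) one_lt_two).comp_tendsto this

theorem SchwartzMap.exists_norm_compSubConstCLM_sub_self_le {X : Type*} [NormedAddCommGroup X]
    [NormedSpace ℂ X] (v : 𝓢(E, ℂ) →L[ℂ] X) (f : 𝓢(E, ℂ)) :
    ∃ C, ∀ a : E, ‖a‖ ≤ 1 → ‖v (f.compSubConstCLM ℂ a - f)‖ ≤ C * ‖a‖ := by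
  obtain ⟨s, C, hC, h⟩ := SchwartzMap.exists_norm_le_sum_seminorm v
  choose B hB hBf using f.exists_pow_mul_iteratedFDeriv_sub_le
  refine ⟨C * ∑ i ∈ s, B i.1 (i.2 + 1) * 2 ^ i.1, fun a ha => (h _).trans ?_⟩
  rw [mul_assoc, Finset.sum_mul]
  refine mul_le_mul_of_nonneg_left (Finset.sum_le_sum fun i hi => ?_) hC
  obtain ⟨k, n⟩ := i
  have hb := hB k (n + 1)
  refine SchwartzMap.seminorm_le_bound ℂ _ _ _ (by positivity) fun y => ?_
  have key := norm_image_sub_le_of_norm_deriv_le_segment_01'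
    (f := fun r : ℝ => (‖y‖ ^ k) • iteratedFDeriv ℝ n f (y - r • a))
    (f' := fun r => (‖y‖ ^ k) • -iteratedFDeriv ℝ n (∂_{a} f : 𝓢(E, ℂ)) (y - r • a))
    (C := B k (n + 1) * 2 ^ k * ‖a‖)
    (fun x _ => ((f.hasDerivAt_iteratedFDeriv_sub_smul n y a x).const_smul (‖y‖ ^ k)).hasDerivWithinAt)
    (fun x hx => by
      rw [smul_neg, norm_neg, norm_smul, norm_pow, norm_norm, ← f.fderiv_iteratedFDeriv_apply]
      calc _ ≤ ‖y‖ ^ k * (‖iteratedFDeriv ℝ (n + 1) f (y - x • a)‖ * ‖a‖) := by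
            rw [← norm_fderiv_iteratedFDeriv]
            gcongr
            exact ContinuousLinearMap.le_opNorm _ _
        _ ≤ B k (n + 1) * (1 + ‖x • a‖) ^ k * ‖a‖ := by
            rw [← mul_assoc]
            exact mul_le_mul_of_nonneg_right (hBf k (n + 1) (x • a) y) (norm_nonneg a)
        _ ≤ _ := by
            gcongr
            rw [norm_smul, Real.norm_of_nonneg hx.1]
            nlinarith [hx.1, hx.2, norm_nonneg a])
  rw [← smul_sub, norm_smul, norm_pow, norm_norm] at key
  rw [SchwartzMap.iteratedFDeriv_compSubConstCLM_sub]
  simpa only [zero_smul, one_smul, sub_zero] using key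

theorem SchwartzMap.continuous_apply_compSubConstCLM {X : Type*} [NormedAddCommGroup X]
    [NormedSpace ℂ X] (v : 𝓢(E, ℂ) →L[ℂ] X) (f : 𝓢(E, ℂ)) :
    Continuous fun a : E => v (f.compSubConstCLM ℂ a) := by
  rw [continuous_iff_continuousAt]
  intro a
  obtain ⟨C, h⟩ := SchwartzMap.exists_norm_compSubConstCLM_sub_self_le
    (v ∘L SchwartzMap.compSubConstCLM ℂ a) f
  rw [ContinuousAt, tendsto_iff_norm_sub_tendsto_zero]
  have hlim : Tendsto (fun b => C * ‖b - a‖) (nhds a) (nhds 0) := by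
    have : Continuous fun b : E => C * ‖b - a‖ := by fun_prop
    simpa using this.tendsto a
  refine squeeze_zero' (Eventually.of_forall fun _ => norm_nonneg _) ?_ hlim
  filter_upwards [Metric.closedBall_mem_nhds a one_pos] with b hb
  have := h (b - a) (by simpa [dist_eq_norm] using hb)
  simpa [SchwartzMap.compSubConstCLM_comp] using this

end Translation

section Exchange

variable {E : Type*} [NormedAddCommGroup E] [NormedSpace ℝ E]

/-- The weighted jet `y ↦ ‖y‖ ^ k • iteratedFDeriv ℝ n f y` as a bounded continuous function. -/
noncomputable def SchwartzMap.weightedJet (k n : ℕ) (f : 𝓢(E, ℂ)) :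
    BoundedContinuousFunction E (E [×n]→L[ℝ] ℂ) :=
  BoundedContinuousFunction.ofNormedAddCommGroup (fun y => ‖y‖ ^ k • iteratedFDeriv ℝ n f y)
    ((continuous_norm.pow k).smul ((f.smooth n).continuous_iteratedFDeriv le_rfl))
    (SchwartzMap.seminorm ℂ k n f) fun y => by
      rw [norm_smul, norm_pow, norm_norm]
      exact SchwartzMap.le_seminorm ℂ k n f y

theorem SchwartzMap.weightedJet_apply (k n : ℕ) (f : 𝓢(E, ℂ)) (y : E) :
    f.weightedJet k n y = ‖y‖ ^ k • iteratedFDeriv ℝ n f y :=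
  rfl

theorem SchwartzMap.norm_weightedJet_le (k n : ℕ) (f : 𝓢(E, ℂ)) :
    ‖f.weightedJet k n‖ ≤ SchwartzMap.seminorm ℂ k n f :=
  BoundedContinuousFunction.norm_ofNormedAddCommGroup_le _ (apply_nonneg _ _) _

theorem SchwartzMap.seminorm_le_norm_weightedJet (k n : ℕ) (f : 𝓢(E, ℂ)) :
    SchwartzMap.seminorm ℂ k n f ≤ ‖f.weightedJet k n‖ := by
  refine SchwartzMap.seminorm_le_bound ℂ _ _ _ (norm_nonneg (f.weightedJet k n)) fun y => ?_
  have := (f.weightedJet k n).norm_coe_le_norm y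
  rwa [SchwartzMap.weightedJet_apply, norm_smul, norm_pow, norm_norm] at this

/-- `SchwartzMap.weightedJet` as a continuous linear map. -/
noncomputable def SchwartzMap.weightedJetCLM (E : Type*) [NormedAddCommGroup E] [NormedSpace ℝ E]
    (k n : ℕ) : 𝓢(E, ℂ) →L[ℂ] BoundedContinuousFunction E (E [×n]→L[ℝ] ℂ) :=
  SchwartzMap.mkCLMtoNormedSpace (σ := RingHom.id ℂ) (fun f : 𝓢(E, ℂ) => f.weightedJet k n)
    (fun f g => by
      ext1 y
      have e : ((f + g : 𝓢(E, ℂ)) : E → ℂ) = f + g := by ext x; simp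
      rw [BoundedContinuousFunction.add_apply, SchwartzMap.weightedJet_apply, e,
        iteratedFDeriv_add_apply (f.contDiffAt n) (g.contDiffAt n), smul_add]
      rfl)
    (fun (c : ℂ) f => by
      ext1 y
      have e : ((c • f : 𝓢(E, ℂ)) : E → ℂ) = c • f := by ext x; simp
      rw [BoundedContinuousFunction.smul_apply, SchwartzMap.weightedJet_apply, e,
        iteratedFDeriv_const_smul_apply (f.contDiffAt n), smul_comm]
      rfl)
    ⟨{(k, n)}, 1, zero_le_one, fun f => by
      simpa [schwartzSeminormFamily] using SchwartzMap.norm_weightedJet_le k n f⟩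

/-- The space of families of bounded continuous jets indexed by a finite set of weights and
orders. -/
def JetSpace (E : Type*) [NormedAddCommGroup E] [NormedSpace ℝ E] (s : Finset (ℕ × ℕ)) : Type _ :=
  ∀ i : s, BoundedContinuousFunction E (E [×i.1.2]→L[ℝ] ℂ)

noncomputable instance (s : Finset (ℕ × ℕ)) : NormedAddCommGroup (JetSpace E s) :=
  inferInstanceAs (NormedAddCommGroup (∀ i : s, BoundedContinuousFunction E (E [×i.1.2]→L[ℝ] ℂ)))

noncomputable instance (s : Finset (ℕ × ℕ)) : NormedSpace ℂ (JetSpace E s) :=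
  inferInstanceAs (NormedSpace ℂ (∀ i : s, BoundedContinuousFunction E (E [×i.1.2]→L[ℝ] ℂ)))

instance (s : Finset (ℕ × ℕ)) : CompleteSpace (JetSpace E s) :=
  inferInstanceAs (CompleteSpace (∀ i : s, BoundedContinuousFunction E (E [×i.1.2]→L[ℝ] ℂ)))

/-- The finite families of weighted jets of a Schwartz function. -/
noncomputable def SchwartzMap.jetCLM (E : Type*) [NormedAddCommGroup E] [NormedSpace ℝ E]
    (s : Finset (ℕ × ℕ)) : 𝓢(E, ℂ) →L[ℂ] JetSpace E s :=
  ContinuousLinearMap.pi fun i : s => SchwartzMap.weightedJetCLM E i.1.1 i.1.2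

theorem SchwartzMap.norm_weightedJet_le_norm_jetCLM {s : Finset (ℕ × ℕ)} {i : ℕ × ℕ} (hi : i ∈ s)
    (f : 𝓢(E, ℂ)) : ‖f.weightedJet i.1 i.2‖ ≤ ‖SchwartzMap.jetCLM E s f‖ :=
  norm_le_pi_norm (fun i : s => f.weightedJet i.1.1 i.1.2) ⟨i, hi⟩

/-- Evaluation of one component of a family of jets at a point and on a family of vectors. -/
noncomputable def JetSpace.evalCLM {s : Finset (ℕ × ℕ)} (i : s) (y : E) (w : Fin i.1.2 → E) :
    JetSpace E s →L[ℂ] ℂ :=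
  LinearMap.mkContinuous
    { toFun := fun F => F i y w
      map_add' := fun _ _ => rfl
      map_smul' := fun _ _ => rfl } (∏ j, ‖w j‖) fun F => by
    have h₁ : ‖F i y‖ ≤ ‖F‖ := ((F i).norm_coe_le_norm y).trans (norm_le_pi_norm F i)
    calc ‖F i y w‖ ≤ ‖F i y‖ * ∏ j, ‖w j‖ := (F i y).le_opNorm w
      _ ≤ ‖F‖ * ∏ j, ‖w j‖ := by gcongr
      _ = _ := mul_comm _ _

theorem JetSpace.ext_evalCLM {s : Finset (ℕ × ℕ)} {F G : JetSpace E s}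
    (h : ∀ i y w, JetSpace.evalCLM i y w F = JetSpace.evalCLM i y w G) : F = G := by
  funext i
  ext y w
  exact h i y w

/-- A functional dominated by the norm of a linear map factors through that map. -/
theorem exists_continuousLinearMap_comp_eq {V X : Type*} [AddCommGroup V] [Module ℂ V]
    [NormedAddCommGroup X] [NormedSpace ℂ X] (u : V →ₗ[ℂ] ℂ) (J : V →ₗ[ℂ] X) (C : ℝ)
    (h : ∀ f, ‖u f‖ ≤ C * ‖J f‖) : ∃ U : X →L[ℂ] ℂ, ∀ f, U (J f) = u f := by
  have hker : LinearMap.ker J ≤ LinearMap.ker u := fun f hf => by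
    have := h f
    rw [LinearMap.mem_ker.1 hf, norm_zero, mul_zero] at this
    exact norm_le_zero_iff.1 this
  let w : LinearMap.range J →ₗ[ℂ] ℂ :=
    (LinearMap.ker J).liftQ u hker ∘ₗ J.quotKerEquivRange.symm.toLinearMap
  have hw (f : V) : w ⟨J f, LinearMap.mem_range_self J f⟩ = u f := by
    have : J.quotKerEquivRange.symm ⟨J f, LinearMap.mem_range_self J f⟩ =
        (LinearMap.ker J).mkQ f := J.quotKerEquivRange_symm_apply_image f _
    simp [w, this]
  obtain ⟨U, hU, -⟩ := exists_extension_norm_eq (LinearMap.range J)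
    (w.mkContinuous C (by
      rintro ⟨_, f, rfl⟩
      rw [hw]
      exact h f))
  exact ⟨U, fun f => (hU ⟨J f, LinearMap.mem_range_self J f⟩).trans (hw f)⟩

variable [MeasurableSpace E] [BorelSpace E] [FiniteDimensional ℝ E]
  {μ : Measure E} [μ.IsAddHaarMeasure]

theorem SchwartzMap.integral_mul_lineDerivOp_sub (ψ g : 𝓢(E, ℂ)) (v y : E) :
    ∫ x, g x * (∂_{v} ψ : 𝓢(E, ℂ)) (y - x) ∂μ = ∫ x, (∂_{v} g : 𝓢(E, ℂ)) x * ψ (y - x) ∂μ := by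
  let R : 𝓢(E, ℂ) →L[ℂ] 𝓢(E, ℂ) :=
    SchwartzMap.compCLMOfContinuousLinearEquiv ℂ (ContinuousLinearEquiv.neg ℝ)
  have hR (f : 𝓢(E, ℂ)) (x : E) : (R f).compSubConstCLM ℂ y x = f (y - x) := by
    simp [R]
  have hd : ∂_{v} ((R ψ).compSubConstCLM ℂ y) = -(R (∂_{v} ψ)).compSubConstCLM ℂ y := by
    rw [SchwartzMap.lineDerivOp_compSubConstCLM,
      SchwartzMap.lineDerivOp_compCLMOfContinuousLinearEquiv]
    simp [R]
  have key := SchwartzMap.integral_mul_lineDerivOp_right_eq_neg_left (μ := μ) g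
    ((R ψ).compSubConstCLM ℂ y) v
  rw [hd] at key
  simp only [neg_apply, hR, mul_neg, integral_neg, neg_inj] at key
  exact key

theorem SchwartzMap.integral_mul_iteratedLineDerivOp_sub {n : ℕ} (ψ g : 𝓢(E, ℂ)) (w : Fin n → E)
    (y : E) :
    ∫ x, g x * (∂^{w} ψ : 𝓢(E, ℂ)) (y - x) ∂μ = ∫ x, (∂^{w} g : 𝓢(E, ℂ)) x * ψ (y - x) ∂μ := by
  induction n generalizing g with
  | zero => rfl
  | succ n ih =>
    rw [LineDeriv.iteratedLineDerivOp_succ_left, LineDeriv.iteratedLineDerivOp_succ_left,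
      SchwartzMap.integral_mul_lineDerivOp_sub, ih,
      SchwartzMap.lineDerivOp_iteratedLineDerivOp_comm]

theorem SchwartzMap.integral_mul_iteratedFDeriv_sub (n : ℕ) (ψ g : 𝓢(E, ℂ)) (w : Fin n → E)
    (y : E) :
    ∫ x, g x * iteratedFDeriv ℝ n ψ (y - x) w ∂μ = ∫ x, ψ x * iteratedFDeriv ℝ n g (y - x) w ∂μ := by
  simp only [← SchwartzMap.iteratedLineDerivOp_eq_iteratedFDeriv]
  rw [SchwartzMap.integral_mul_iteratedLineDerivOp_sub,
    ← integral_sub_left_eq_self (fun x => (∂^{w} g : 𝓢(E, ℂ)) x * ψ (y - x)) μ y]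
  simp [mul_comm]

theorem SchwartzMap.integrable_one_add_norm_pow_mul (f : 𝓢(E, ℂ)) (K : ℕ) :
    Integrable (fun x => (1 + ‖x‖) ^ K * ‖f x‖) μ := by
  have h : Integrable (fun x => 2 ^ (K - 1) * (‖f x‖ + ‖x‖ ^ K * ‖f x‖)) μ :=
    ((f.integrable.norm).add (f.integrable_pow_mul μ K)).const_mul _
  refine h.mono' (by fun_prop) (Eventually.of_forall fun x => ?_)
  rw [Real.norm_of_nonneg (by positivity)]
  have := add_pow_le zero_le_one (norm_nonneg x) K
  calc (1 + ‖x‖) ^ K * ‖f x‖ ≤ (2 ^ (K - 1) * (1 ^ K + ‖x‖ ^ K)) * ‖f x‖ := by gcongr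
    _ = _ := by rw [one_pow]; ring

theorem SchwartzMap.integrable_smul_apply_compSubConstCLM {X : Type*} [NormedAddCommGroup X]
    [NormedSpace ℂ X] (v : 𝓢(E, ℂ) →L[ℂ] X) (ψ g : 𝓢(E, ℂ)) (t : ℝ) :
    Integrable (fun x => g x • v (ψ.compSubConstCLM ℂ (t • x))) μ := by
  obtain ⟨C, K, hC, h⟩ := SchwartzMap.exists_norm_compSubConstCLM_le v ψ
  have hc : Continuous fun x : E => v (ψ.compSubConstCLM ℂ (t • x)) :=
    (SchwartzMap.continuous_apply_compSubConstCLM v ψ).comp (continuous_const_smul t)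
  refine ((g.integrable_one_add_norm_pow_mul (μ := μ) K).const_mul (C * (1 + |t|) ^ K)).mono'
    (g.continuous.smul hc).aestronglyMeasurable (Eventually.of_forall fun x => ?_)
  rw [norm_smul]
  have h1 : 1 + ‖t • x‖ ≤ (1 + |t|) * (1 + ‖x‖) := by
    rw [norm_smul, Real.norm_eq_abs]
    nlinarith [abs_nonneg t, norm_nonneg x]
  calc ‖g x‖ * ‖v (ψ.compSubConstCLM ℂ (t • x))‖
      ≤ ‖g x‖ * (C * ((1 + |t|) * (1 + ‖x‖)) ^ K) := by
        gcongr
        exact (h _).trans (by gcongr)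
    _ = _ := by rw [mul_pow]; ring

/-- Both sides equal `u (ψ ∗ g)`. -/
theorem SchwartzMap.integral_apply_compSubConstCLM_mul_comm (u : 𝓢(E, ℂ) →L[ℂ] ℂ)
    (ψ g : 𝓢(E, ℂ)) :
    ∫ x, g x • u (ψ.compSubConstCLM ℂ x) ∂μ = ∫ x, ψ x • u (g.compSubConstCLM ℂ x) ∂μ := by
  obtain ⟨s, C, hC, h⟩ := SchwartzMap.exists_norm_le_sum_seminorm u
  let J := SchwartzMap.jetCLM E s
  have hb (f : 𝓢(E, ℂ)) : ‖u f‖ ≤ C * s.card * ‖J f‖ := by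
    refine (h f).trans ?_
    rw [mul_assoc, ← nsmul_eq_mul, ← Finset.sum_const]
    refine mul_le_mul_of_nonneg_left (Finset.sum_le_sum fun i hi => ?_) hC
    exact (SchwartzMap.seminorm_le_norm_weightedJet i.1 i.2 f).trans
      (SchwartzMap.norm_weightedJet_le_norm_jetCLM hi f)
  obtain ⟨U, hU⟩ := exists_continuousLinearMap_comp_eq u.toLinearMap J.toLinearMap
    (C * s.card) hb
  have h_int (ψ g : 𝓢(E, ℂ)) : Integrable (fun x => g x • J (ψ.compSubConstCLM ℂ x)) μ := by
    simpa using SchwartzMap.integrable_smul_apply_compSubConstCLM (μ := μ) J ψ g 1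
  have hswap (ψ g : 𝓢(E, ℂ)) : ∫ x, g x • u (ψ.compSubConstCLM ℂ x) ∂μ =
      U (∫ x, g x • J (ψ.compSubConstCLM ℂ x) ∂μ) := by
    rw [← U.integral_comp_comm (h_int ψ g)]
    refine integral_congr_ae (Eventually.of_forall fun x => ?_)
    simp only [map_smul]
    exact congrArg _ (hU _).symm
  rw [hswap, hswap]
  refine congrArg U (JetSpace.ext_evalCLM fun i y w => ?_)
  let ev : JetSpace E s →L[ℂ] ℂ := JetSpace.evalCLM i y w
  have hev (ψ g : 𝓢(E, ℂ)) : ev (∫ x, g x • J (ψ.compSubConstCLM ℂ x) ∂μ) =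
      ‖y‖ ^ i.1.1 • ∫ x, g x * iteratedFDeriv ℝ i.1.2 ψ (y - x) w ∂μ := by
    rw [← ev.integral_comp_comm (h_int ψ g), ← integral_smul]
    refine integral_congr_ae (Eventually.of_forall fun x => ?_)
    change g x * (‖y‖ ^ i.1.1 • iteratedFDeriv ℝ i.1.2 (ψ.compSubConstCLM ℂ x) y w) = _
    rw [SchwartzMap.iteratedFDeriv_compSubConstCLM, mul_smul_comm]
  exact (hev ψ g).trans ((congrArg _ (SchwartzMap.integral_mul_iteratedFDeriv_sub _ _ _ _ _)).trans
    (hev g ψ).symm)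

end Exchange

section Moments

variable {m : ℕ}

/-- Multiplication of a Schwartz function by the `j`-th coordinate. -/
noncomputable def SchwartzMap.coordMul (j : Fin m) (ψ : 𝓢(Fin m → ℝ, ℂ)) : 𝓢(Fin m → ℝ, ℂ) :=
  SchwartzMap.smulLeftCLM ℂ (fun z : Fin m → ℝ => (z j : ℂ)) ψ

theorem SchwartzMap.coordMul_apply (j : Fin m) (ψ : 𝓢(Fin m → ℝ, ℂ)) (z : Fin m → ℝ) :
    ψ.coordMul j z = z j * ψ z :=
  SchwartzMap.smulLeftCLM_apply_apply
    (Complex.ofRealCLM ∘L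
      ContinuousLinearMap.proj (R := ℝ) (φ := fun _ : Fin m => ℝ) j).hasTemperateGrowth ψ z

theorem SchwartzMap.integral_coordMul (j : Fin m) (ψ : 𝓢(Fin m → ℝ, ℂ)) (α : Fin m → ℕ) :
    ∫ x, (∏ i, (x i : ℂ) ^ α i) * ψ.coordMul j x =
      ∫ x, (∏ i, (x i : ℂ) ^ (α + Pi.single j 1 : Fin m → ℕ) i) * ψ x := by
  refine integral_congr_ae (Eventually.of_forall fun x => ?_)
  have h : ∏ i, (x i : ℂ) ^ (Pi.single j 1 : Fin m → ℕ) i = x j := by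
    rw [Finset.prod_eq_single j (fun i _ hi => by simp [hi]) (by simp)]
    simp
  simp only [SchwartzMap.coordMul_apply, Pi.add_apply, pow_add, Finset.prod_mul_distrib, h]
  ring

theorem SchwartzMap.apply_compSubConstCLM_lineDerivOp (u : 𝓢(Fin m → ℝ, ℂ) →L[ℂ] ℂ)
    (g : 𝓢(Fin m → ℝ, ℂ)) (z a : Fin m → ℝ) :
    u ((∂_{z} g : 𝓢(Fin m → ℝ, ℂ)).compSubConstCLM ℂ a) =
      ∑ j, (z j : ℂ) *
        u ((∂_{(Pi.single j 1 : Fin m → ℝ)} g : 𝓢(Fin m → ℝ, ℂ)).compSubConstCLM ℂ a) := by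
  have hz : (∂_{z} g : 𝓢(Fin m → ℝ, ℂ)) =
      ∑ j, (z j : ℂ) • (∂_{(Pi.single j 1 : Fin m → ℝ)} g : 𝓢(Fin m → ℝ, ℂ)) := by
    ext x
    have hs : z = ∑ j, z j • (Pi.single j 1 : Fin m → ℝ) := by
      simpa using pi_eq_sum_univ' z
    simp only [SchwartzMap.lineDerivOp_apply_eq_fderiv, sum_apply, smul_apply]
    conv_lhs => rw [hs, map_sum]
    simp
  rw [hz]
  simp

variable (u : 𝓢(Fin m → ℝ, ℂ) →L[ℂ] ℂ)

/-- The pairing of `u` with the average of the translates of `g` by `t • z`, weighted by `ψ z`. -/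
noncomputable def SchwartzMap.dilatedAverage (ψ g : 𝓢(Fin m → ℝ, ℂ)) (t : ℝ) : ℂ :=
  ∫ z, ψ z • u (g.compSubConstCLM ℂ (t • z))

theorem SchwartzMap.exists_integrable_bound_smul_apply_compSubConstCLM
    (ψ g : 𝓢(Fin m → ℝ, ℂ)) (R : ℝ) :
    ∃ b : (Fin m → ℝ) → ℝ, Integrable b ∧
      ∀ t, |t| ≤ R → ∀ z, ‖ψ z • u (g.compSubConstCLM ℂ (t • z))‖ ≤ b z := by
  obtain ⟨C, K, hC, h⟩ := SchwartzMap.exists_norm_compSubConstCLM_le u g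
  refine ⟨_, (ψ.integrable_one_add_norm_pow_mul K).const_mul (C * (1 + R) ^ K),
    fun t ht z => ?_⟩
  have h1 : 1 + ‖t • z‖ ≤ (1 + R) * (1 + ‖z‖) := by
    rw [norm_smul, Real.norm_eq_abs]
    nlinarith [abs_nonneg t, norm_nonneg z, mul_le_mul_of_nonneg_right ht (norm_nonneg z)]
  rw [norm_smul]
  calc ‖ψ z‖ * ‖u (g.compSubConstCLM ℂ (t • z))‖
      ≤ ‖ψ z‖ * (C * ((1 + R) * (1 + ‖z‖)) ^ K) := by
        gcongr
        exact (h _).trans (by gcongr)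
    _ = _ := by rw [mul_pow]; ring

theorem SchwartzMap.hasDerivAt_dilatedAverage (ψ g : 𝓢(Fin m → ℝ, ℂ)) (t : ℝ) :
    HasDerivAt (SchwartzMap.dilatedAverage u ψ g)
      (-∑ j, SchwartzMap.dilatedAverage u (ψ.coordMul j)
        (∂_{(Pi.single j 1 : Fin m → ℝ)} g) t) t := by
  let F' (r : ℝ) (z : Fin m → ℝ) : ℂ := -∑ j, ψ.coordMul j z •
    u ((∂_{(Pi.single j 1 : Fin m → ℝ)} g : 𝓢(Fin m → ℝ, ℂ)).compSubConstCLM ℂ (r • z))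
  have h_int (j : Fin m) : Integrable fun z => ψ.coordMul j z •
      u ((∂_{(Pi.single j 1 : Fin m → ℝ)} g : 𝓢(Fin m → ℝ, ℂ)).compSubConstCLM ℂ (t • z)) :=
    SchwartzMap.integrable_smul_apply_compSubConstCLM u _ _ t
  have hF' : Integrable (F' t) := (integrable_finsetSum _ fun j _ => h_int j).neg
  choose b hb hbound using fun j => SchwartzMap.exists_integrable_bound_smul_apply_compSubConstCLM
    u (ψ.coordMul j) (∂_{(Pi.single j 1 : Fin m → ℝ)} g) (|t| + 1)
  have key := hasDerivAt_integral_of_dominated_loc_of_deriv_le (μ := volume)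
    (F := fun r z => ψ z • u (g.compSubConstCLM ℂ (r • z))) (F' := F')
    (bound := fun z => ∑ j, b j z) (Metric.ball_mem_nhds t one_pos)
    (Eventually.of_forall fun r =>
      (SchwartzMap.integrable_smul_apply_compSubConstCLM u g ψ r).aestronglyMeasurable)
    (SchwartzMap.integrable_smul_apply_compSubConstCLM u g ψ t)
    hF'.aestronglyMeasurable
    (Eventually.of_forall fun z r hr => by
      have hr' : |r| ≤ |t| + 1 := by
        have := abs_sub_abs_le_abs_sub r t
        rw [Metric.mem_ball, Real.dist_eq] at hr
        linarith
      rw [norm_neg]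
      exact norm_sum_le_of_le _ fun j _ => hbound j r hr' z)
    (integrable_finsetSum _ fun j _ => hb j)
    (Eventually.of_forall fun z r _ => by
      convert! (SchwartzMap.hasDerivAt_apply_compSubConstCLM_smul u g z r).const_smul (ψ z) using 1
      rw [SchwartzMap.apply_compSubConstCLM_lineDerivOp]
      simp only [F', SchwartzMap.coordMul_apply,
        smul_eq_mul, mul_neg, Finset.mul_sum]
      congr 1
      exact Finset.sum_congr rfl fun j _ => by ring)
  convert! key.2 using 1
  simp only [F', integral_neg]
  rw [integral_finsetSum _ fun j _ => h_int j]
  rfl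

theorem SchwartzMap.dilatedAverage_zero (ψ g : 𝓢(Fin m → ℝ, ℂ)) :
    SchwartzMap.dilatedAverage u ψ g 0 = (∫ z, ψ z) * u g := by
  have h : g.compSubConstCLM ℂ 0 = g := by ext x; simp
  simp only [SchwartzMap.dilatedAverage, zero_smul, h, smul_eq_mul]
  exact integral_mul_const _ _

/-- Decay estimates for the derivative of `dilatedAverage` integrate to estimates of one order
higher. -/
theorem SchwartzMap.exists_norm_dilatedAverage_sub_le (ψ g : 𝓢(Fin m → ℝ, ℂ)) (N : ℕ)
    (h : ∀ j, ∃ C, 0 ≤ C ∧ ∀ t, |t| ≤ 1 → ‖SchwartzMap.dilatedAverage u (ψ.coordMul j)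
      (∂_{(Pi.single j 1 : Fin m → ℝ)} g) t‖ ≤ C * |t| ^ N) :
    ∃ C, 0 ≤ C ∧ ∀ t, |t| ≤ 1 →
      ‖SchwartzMap.dilatedAverage u ψ g t - (∫ z, ψ z) * u g‖ ≤ C * |t| ^ (N + 1) := by
  choose C hC hbound using h
  refine ⟨∑ j, C j, Finset.sum_nonneg fun j _ => hC j, fun t ht => ?_⟩
  have key := (convex_Icc (-|t|) |t|).norm_image_sub_le_of_norm_hasDerivWithin_le
    (f := SchwartzMap.dilatedAverage u ψ g) (C := (∑ j, C j) * |t| ^ N) (x := 0) (y := t)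
    (fun r _ => (SchwartzMap.hasDerivAt_dilatedAverage u ψ g r).hasDerivWithinAt)
    (fun r hr => by
      have hr' : |r| ≤ |t| := abs_le.2 hr
      rw [norm_neg, Finset.sum_mul]
      refine norm_sum_le_of_le _ fun j _ => (hbound j r (hr'.trans ht)).trans ?_
      have := hC j
      gcongr)
    (by simp) ⟨neg_abs_le t, le_abs_self t⟩
  rwa [SchwartzMap.dilatedAverage_zero, sub_zero, Real.norm_eq_abs, mul_assoc, ← pow_succ] at key

theorem SchwartzMap.exists_norm_dilatedAverage_le (ψ g : 𝓢(Fin m → ℝ, ℂ)) (N : ℕ)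
    (hψ : ∀ α : Fin m → ℕ, ∫ x, (∏ j, (x j : ℂ) ^ α j) * ψ x = 0) :
    ∃ C, 0 ≤ C ∧ ∀ t, |t| ≤ 1 → ‖SchwartzMap.dilatedAverage u ψ g t‖ ≤ C * |t| ^ N := by
  induction N generalizing ψ g with
  | zero =>
    obtain ⟨b, hb, h⟩ :=
      SchwartzMap.exists_integrable_bound_smul_apply_compSubConstCLM u ψ g 1
    have hle (t : ℝ) (ht : |t| ≤ 1) : ‖SchwartzMap.dilatedAverage u ψ g t‖ ≤ ∫ z, b z :=
      norm_integral_le_of_norm_le hb (Eventually.of_forall fun z => h t ht z)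
    exact ⟨∫ z, b z, (norm_nonneg _).trans (hle 0 (by simp)), by simpa using hle⟩
  | succ N ih =>
    have h0 : ∫ z, ψ z = 0 := by simpa using hψ 0
    simpa [h0] using SchwartzMap.exists_norm_dilatedAverage_sub_le u ψ g N fun j =>
      ih _ _ fun α => by rw [SchwartzMap.integral_coordMul]; exact hψ _

theorem IsMollifier.exists_norm_dilatedAverage_sub_le {φ : 𝓢(Fin m → ℝ, ℂ)} (hφ : IsMollifier φ)
    (g : 𝓢(Fin m → ℝ, ℂ)) (N : ℕ) :
    ∃ C, 0 ≤ C ∧ ∀ t, |t| ≤ 1 → ‖SchwartzMap.dilatedAverage u φ g t - u g‖ ≤ C * |t| ^ (N + 1) := by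
  simpa [hφ.1] using SchwartzMap.exists_norm_dilatedAverage_sub_le u φ g N fun j =>
    SchwartzMap.exists_norm_dilatedAverage_le u _ _ N fun α => by
      rw [SchwartzMap.integral_coordMul]
      exact hφ.2 _ fun h => by simpa using congrFun h j

theorem SchwartzMap.integral_apply_scaled_mul_eq_dilatedAverage (φ g : 𝓢(Fin m → ℝ, ℂ)) {t : ℝ}
    (ht : 0 < t) (Ψ : (Fin m → ℝ) → 𝓢(Fin m → ℝ, ℂ)) (hΨ : ∀ x v, Ψ x v = scaled φ t (x - v)) :
    ∫ x, u (Ψ x) * g x = SchwartzMap.dilatedAverage u φ g (-t) := by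
  have htrans (x : Fin m → ℝ) : Ψ x = (Ψ 0).compSubConstCLM ℂ x := by
    ext v
    simp [hΨ]
  have hfin : Module.finrank ℝ (Fin m → ℝ) = m := by simp
  calc ∫ x, u (Ψ x) * g x = ∫ x, g x • u ((Ψ 0).compSubConstCLM ℂ x) := by
        simp only [← htrans, smul_eq_mul, mul_comm]
    _ = ∫ x, Ψ 0 x • u (g.compSubConstCLM ℂ x) :=
        SchwartzMap.integral_apply_compSubConstCLM_mul_comm u (Ψ 0) g
    _ = ((t ^ (-(m : ℤ)) : ℝ) : ℂ) * ∫ x, φ ((-t)⁻¹ • x) •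
          u (g.compSubConstCLM ℂ ((-t) • (-t)⁻¹ • x)) := by
        rw [← integral_const_mul]
        refine integral_congr_ae (Eventually.of_forall fun x => ?_)
        have hx : (-t) • (-t)⁻¹ • x = x := smul_inv_smul₀ (neg_ne_zero.2 ht.ne') x
        simp only [hx]
        simp only [hΨ, scaled, smul_eq_mul, mul_assoc, zero_sub, smul_neg, inv_neg, neg_smul]
    _ = SchwartzMap.dilatedAverage u φ g (-t) := by
        rw [Measure.integral_comp_inv_smul volume
          (fun z => φ z • u (g.compSubConstCLM ℂ ((-t) • z))) (-t), hfin, abs_pow, abs_neg,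
          abs_of_pos ht, Complex.real_smul, ← mul_assoc, ← Complex.ofReal_mul]
        have : t ^ (-(m : ℤ)) * t ^ m = 1 := by
          rw [zpow_neg, zpow_natCast, inv_mul_cancel₀ (pow_ne_zero m ht.ne')]
        rw [this, Complex.ofReal_one, one_mul]
        rfl

end Moments

/-- the net `(u ∗ φ_{ε^s})_ε` is equal to `u` in the generalized
distribution sense. -/
theorem stmt18 (m : ℕ) (hm : 1 ≤ m)
    (u : SchwartzMap (Fin m → ℝ) ℂ →L[ℂ] ℂ)
    (s : ℝ) (hs : s ∈ Set.Ioo (0:ℝ) 1)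
    (φ : SchwartzMap (Fin m → ℝ) ℂ) (hφ : IsMollifier φ)
    (Φ : ℝ → (Fin m → ℝ) → SchwartzMap (Fin m → ℝ) ℂ)
    (hΦ : ∀ t ∈ Set.Ioc (0:ℝ) 1, ∀ x v, Φ t x v = scaled ⇑φ t (x - v))
    (g : SchwartzMap (Fin m → ℝ) ℂ) (p : ℕ) :
    ∃ C > (0:ℝ), ∃ η > (0:ℝ), ∀ ε : ℝ, 0 < ε → ε ≤ η →
      ‖(∫ x : Fin m → ℝ, u (Φ (ε ^ s) x) * g x) - u g‖ ≤ C * ε ^ p := by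
  obtain ⟨N, hN⟩ := exists_nat_gt (p / s)
  obtain ⟨C, hC, h⟩ := hφ.exists_norm_dilatedAverage_sub_le u g N
  refine ⟨C + 1, by positivity, 1, one_pos, fun ε hε hε1 => ?_⟩
  have ht : 0 < ε ^ s := Real.rpow_pos_of_pos hε s
  have ht1 : ε ^ s ≤ 1 := Real.rpow_le_one hε.le hε1 hs.1.le
  have habs : |(-ε ^ s)| = ε ^ s := by rw [abs_neg, abs_of_pos ht]
  have hpow : (ε ^ s) ^ (N + 1) ≤ ε ^ p := by
    rw [← Real.rpow_mul_natCast hε.le, ← Real.rpow_natCast ε p]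
    refine Real.rpow_le_rpow_of_exponent_ge hε hε1 ?_
    rw [div_lt_iff₀ hs.1] at hN
    push_cast
    nlinarith [hs.1]
  rw [SchwartzMap.integral_apply_scaled_mul_eq_dilatedAverage u φ g ht (Φ (ε ^ s))
    (hΦ _ ⟨ht, ht1⟩)]
  refine (h _ (habs.le.trans ht1)).trans ?_
  rw [habs]
  gcongr
  linarith
end
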